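/- arXiv:2101.04986 — 3 statements merged into one kernel-verified Lean document; each statement's English description precedes it below -/
import Mathlib

section
/- Let X₁, X₂ be compact metric spaces, let C : X₁ × 𝒫(X₂) → (−∞,+∞] be lower semi-continuous, bounded from below, with C(x₁,·) convex on 𝒫(X₂) for every x₁ ∈ X₁, let F₁, F₂ be admissible entropy functions with (F₁)'_∞ + (F₂)'_∞ + inf C > 0, and let μ₁ ∈ ℳ(X₁), μ₂ ∈ ℳ(X₂). If the weak optimal entropy transport problem is feasible, i.e. there exists γ ∈ ℳ(X₁×X₂) with ℰ_C(γ|μ₁,μ₂) < ∞, then ℰ_C(μ₁,μ₂) = sup_{(φ₁,φ₂)∈Λ} Σ_{i=1}^2 ∫_{X_i} F_i°(φ_i) dμ_i. -/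
open MeasureTheory Filter Set Topology
open scoped ENNReal NNReal BoundedContinuousFunction

noncomputable section

/-- The "positive part" of an extended real number, as an element of `ℝ≥0∞`. -/
def posE (a : EReal) : ℝ≥0∞ := if a = ⊤ then ⊤ else ENNReal.ofReal a.toReal

/-- Integral of an `EReal`-valued function: positive part minus negative part
(in `EReal`, so that it is always defined). -/
def eIntegral {α : Type*} [MeasurableSpace α] (μ : Measure α) (f : α → EReal) : EReal :=
  ((∫⁻ x, posE (f x) ∂μ : ℝ≥0∞) : EReal) - ((∫⁻ x, posE (-(f x)) ∂μ : ℝ≥0∞) : EReal)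

/-- The recession constant `lim_{s→∞} G(s)/s` (as a `limsup`, which coincides with the
limit for convex functions). -/
def recessionOf (G : ℝ → ℝ≥0∞) : ℝ≥0∞ :=
  Filter.limsup (fun s : ℝ => G s / ENNReal.ofReal s) Filter.atTop

/-- An admissible entropy function: a convex, lower semicontinuous function
`F : [0,∞) → [0,∞]` which is finite at some positive point. -/
structure EntropyFn where
  F : ℝ → ℝ≥0∞
  convex' : ∀ a ∈ Ici (0:ℝ), ∀ b ∈ Ici (0:ℝ), ∀ t : ℝ, 0 ≤ t → t ≤ 1 →
    F (t * a + (1 - t) * b) ≤ ENNReal.ofReal t * F a + ENNReal.ofReal (1 - t) * F b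
  lsc : LowerSemicontinuousOn F (Ici (0:ℝ))
  dom : ∃ s : ℝ, 0 < s ∧ F s ≠ ∞

namespace EntropyFn

/-- The recession constant `F'_∞ = lim_{s→∞} F(s)/s`. -/
def recC (F : EntropyFn) : ℝ≥0∞ := recessionOf F.F

/-- `F` is superlinear if `F'_∞ = ∞`. -/
def Superlinear (F : EntropyFn) : Prop := F.recC = ∞

/-- `F°(φ) := inf_{s ≥ 0} (φ·s + F(s))`, extended to `EReal` arguments. -/
def circ (F : EntropyFn) (φ : EReal) : EReal :=
  ⨅ s : Ici (0:ℝ), φ * ((s : ℝ) : EReal) + ((F.F (s : ℝ) : ℝ≥0∞) : EReal)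

/-- The (interior of the) domain of `F°` is taken inside the set where `F°` is not `-∞`. -/
def circDom (F : EntropyFn) : Set ℝ := {φ : ℝ | F.circ (φ : EReal) ≠ ⊥}

/-- The reverse entropy function `R(r) = r·F(1/r)` for `r > 0`, with `R(0) = F'_∞`. -/
def revF (F : EntropyFn) (r : ℝ) : ℝ≥0∞ :=
  if 0 < r then ENNReal.ofReal r * F.F (1 / r) else F.recC

/-- The Legendre conjugate `R*(ψ) = sup_{s ≥ 0} (s·ψ − R(s))` of the reverse function. -/
def revConj (F : EntropyFn) (ψ : ℝ) : EReal :=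
  ⨆ s : Ici (0:ℝ), (((s : ℝ) * ψ : ℝ) : EReal) - ((F.revF (s : ℝ) : ℝ≥0∞) : EReal)

end EntropyFn

/-- The entropy functional `ℱ(γ|μ) = ∫ F(dγ/dμ) dμ + F'_∞ · γ^⊥(X)`, where
`γ = (dγ/dμ)·μ + γ^⊥` is the Lebesgue decomposition of `γ` with respect to `μ`. -/
def entF {X : Type*} [MeasurableSpace X] (F : EntropyFn) (γ μ : Measure X) : ℝ≥0∞ :=
  (∫⁻ x, F.F ((γ.rnDeriv μ x).toReal) ∂μ) + F.recC * (γ.singularPart μ) Set.univ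

/-- The reverse entropy functional `ℛ(μ|γ) = ∫ R(dμ/dγ) dγ + R'_∞ · μ^⊥(X)`. -/
def revEntF {X : Type*} [MeasurableSpace X] (F : EntropyFn) (μ γ : Measure X) : ℝ≥0∞ :=
  (∫⁻ x, F.revF ((μ.rnDeriv γ x).toReal) ∂γ) + recessionOf F.revF * (μ.singularPart γ) Set.univ

section WOET

variable {X₁ X₂ : Type*} [MeasurableSpace X₁] [MeasurableSpace X₂]

/-- The weak entropy-transport cost
`ℰ_C(γ|μ₁,μ₂) = ℱ₁(γ₁|μ₁) + ℱ₂(γ₂|μ₂) + ∫ C(x₁, γ_{x₁}) dγ₁(x₁)`. -/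
def wCost [StandardBorelSpace X₂] [Nonempty X₂]
    (C : X₁ → ProbabilityMeasure X₂ → EReal) (F₁ F₂ : EntropyFn)
    (μ₁ : Measure X₁) (μ₂ : Measure X₂)
    (γ : Measure (X₁ × X₂)) (hγ : IsFiniteMeasure γ) : EReal :=
  haveI := hγ
  ((entF F₁ γ.fst μ₁ : ℝ≥0∞) : EReal) + ((entF F₂ γ.snd μ₂ : ℝ≥0∞) : EReal) +
    eIntegral γ.fst (fun x₁ => C x₁ ⟨γ.condKernel x₁, inferInstance⟩)

/-- The weak optimal entropy-transport value `ℰ_C(μ₁,μ₂)`. -/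
def wOpt [StandardBorelSpace X₂] [Nonempty X₂]
    (C : X₁ → ProbabilityMeasure X₂ → EReal) (F₁ F₂ : EntropyFn)
    (μ₁ : Measure X₁) (μ₂ : Measure X₂) : EReal :=
  sInf { e : EReal | ∃ (γ : Measure (X₁ × X₂)) (hγ : IsFiniteMeasure γ),
    e = wCost C F₁ F₂ μ₁ μ₂ γ hγ }

variable [TopologicalSpace X₁] [TopologicalSpace X₂]

/-- The dual feasible set `Λ`. -/
def lamSet (C : X₁ → ProbabilityMeasure X₂ → EReal) (F₁ F₂ : EntropyFn) :
    Set ((X₁ →ᵇ ℝ) × (X₂ →ᵇ ℝ)) :=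
  { φ | (∀ x, φ.1 x ∈ interior F₁.circDom) ∧ (∀ x, φ.2 x ∈ interior F₂.circDom) ∧
      ∀ (x₁ : X₁) (p : ProbabilityMeasure X₂),
        ((φ.1 x₁ + ∫ x₂, φ.2 x₂ ∂(p : Measure X₂) : ℝ) : EReal) ≤ C x₁ p }

/-- The dual feasible set `Λ_R`. -/
def lamRSet (C : X₁ → ProbabilityMeasure X₂ → EReal) (F₁ F₂ : EntropyFn) :
    Set ((X₁ →ᵇ ℝ) × (X₂ →ᵇ ℝ)) :=
  { φ | (∃ b : ℝ, ((b : ℝ) : EReal) < ((F₁.F 0 : ℝ≥0∞) : EReal) ∧ ∀ x, φ.1 x ≤ b) ∧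
        (∃ b : ℝ, ((b : ℝ) : EReal) < ((F₂.F 0 : ℝ≥0∞) : EReal) ∧ ∀ x, φ.2 x ≤ b) ∧
        ∀ (x₁ : X₁) (p : ProbabilityMeasure X₂),
          F₁.revConj (φ.1 x₁) + eIntegral (p : Measure X₂) (fun x₂ => F₂.revConj (φ.2 x₂))
            ≤ C x₁ p }

/-- The dual feasible set `Λ_ET` (constraints tested against all pairs of nonnegative finite
measures; on all other signed measures `ET = +∞`, so those constraints are vacuous). -/
def lamETSet [StandardBorelSpace X₂] [Nonempty X₂]
    (C : X₁ → ProbabilityMeasure X₂ → EReal) (F₁ F₂ : EntropyFn) :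
    Set ((X₁ →ᵇ ℝ) × (X₂ →ᵇ ℝ)) :=
  { φ | ∀ (μ₁ : Measure X₁) (μ₂ : Measure X₂), IsFiniteMeasure μ₁ → IsFiniteMeasure μ₂ →
      (((∫ x, φ.1 x ∂μ₁) + ∫ x, φ.2 x ∂μ₂ : ℝ) : EReal) ≤ wOpt C F₁ F₂ μ₁ μ₂ }

/-- The set `Λ_ET^<`. -/
def lamETltSet [StandardBorelSpace X₂] [Nonempty X₂]
    (C : X₁ → ProbabilityMeasure X₂ → EReal) (F₁ F₂ : EntropyFn) :
    Set ((X₁ →ᵇ ℝ) × (X₂ →ᵇ ℝ)) :=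
  { φ ∈ lamETSet C F₁ F₂ |
      (∃ b : ℝ, ((b : ℝ) : EReal) < ((F₁.F 0 : ℝ≥0∞) : EReal) ∧ ∀ x, φ.1 x ≤ b) ∧
      (∃ b : ℝ, ((b : ℝ) : EReal) < ((F₂.F 0 : ℝ≥0∞) : EReal) ∧ ∀ x, φ.2 x ≤ b) }

/-- `R_C φ(x₁) := inf_{p ∈ 𝒫(X₂)} (C(x₁,p) + ∫ φ dp)`. -/
def RCfun (C : X₁ → ProbabilityMeasure X₂ → EReal) (φ : X₂ →ᵇ ℝ) (x₁ : X₁) : EReal :=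
  ⨅ p : ProbabilityMeasure X₂, C x₁ p + ((∫ x₂, φ x₂ ∂(p : Measure X₂) : ℝ) : EReal)

/-- Property (BM) of an admissible entropy function on a space `X`. -/
def HasBM (X : Type*) [TopologicalSpace X] [MeasurableSpace X] (F : EntropyFn) : Prop :=
  ∀ ψ : X →ᵇ ℝ, (∃ b : ℝ, ((b : ℝ) : EReal) < ((F.F 0 : ℝ≥0∞) : EReal) ∧ ∀ x, ψ x ≤ b) →
    ∃ s : X → ℝ, Measurable s ∧ (∃ M : ℝ, ∀ x, |s x| ≤ M) ∧ (∀ x, 0 < s x) ∧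
      ∀ x, ((F.revF (s x) : ℝ≥0∞) : EReal) + F.revConj (ψ x) = ((s x * ψ x : ℝ) : EReal)

end WOET

/-- The functional `ET` extended to pairs of finite signed measures:
it equals `ℰ_C(μ₁,μ₂)` when both arguments are (induced by) nonnegative finite measures,
and `+∞` otherwise. -/
def ETsgn {X₁ X₂ : Type*} [MeasurableSpace X₁] [MeasurableSpace X₂]
    [StandardBorelSpace X₂] [Nonempty X₂]
    (C : X₁ → ProbabilityMeasure X₂ → EReal) (F₁ F₂ : EntropyFn)
    (ν₁ : SignedMeasure X₁) (ν₂ : SignedMeasure X₂) : EReal :=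
  sInf { e : EReal | ∃ (μ₁ : Measure X₁) (h₁ : IsFiniteMeasure μ₁)
      (μ₂ : Measure X₂) (h₂ : IsFiniteMeasure μ₂),
      ν₁ = @Measure.toSignedMeasure X₁ _ μ₁ h₁ ∧ ν₂ = @Measure.toSignedMeasure X₂ _ μ₂ h₂ ∧
      e = wOpt C F₁ F₂ μ₁ μ₂ }

section Martingale

variable {X : Set ℝ}

/-- The martingale condition for a finite measure on `X × X`:
`∫ y dγ_x(y) = x` for `γ₁`-a.e. `x`. -/
def martCond [StandardBorelSpace ↥X] [Nonempty ↥X]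
    (γ : Measure (↥X × ↥X)) (hγ : IsFiniteMeasure γ) : Prop :=
  haveI := hγ
  ∀ᵐ x ∂γ.fst, (∫ y, (y : ℝ) ∂(γ.condKernel x)) = (x : ℝ)

/-- The martingale optimal entropy transport value `ℰ_M(μ₁,μ₂)` (with an `EReal`-valued
cost `c`). -/
def eMart [StandardBorelSpace ↥X] [Nonempty ↥X]
    (c : ↥X → ↥X → EReal) (F₁ F₂ : EntropyFn) (μ₁ μ₂ : Measure ↥X) : EReal :=
  sInf { e : EReal | ∃ (γ : Measure (↥X × ↥X)) (hγ : IsFiniteMeasure γ), martCond γ hγ ∧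
    e = ((entF F₁ γ.fst μ₁ : ℝ≥0∞) : EReal) + ((entF F₂ γ.snd μ₂ : ℝ≥0∞) : EReal) +
        eIntegral γ (fun q => c q.1 q.2) }

/-- The martingale optimal entropy transport value `ℰ_M(μ₁,μ₂)` (with a `[0,∞]`-valued
cost `c`). -/
def eMartNN [StandardBorelSpace ↥X] [Nonempty ↥X]
    (c : ↥X → ↥X → ℝ≥0∞) (F₁ F₂ : EntropyFn) (μ₁ μ₂ : Measure ↥X) : EReal :=
  sInf { e : EReal | ∃ (γ : Measure (↥X × ↥X)) (hγ : IsFiniteMeasure γ), martCond γ hγ ∧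
    e = ((entF F₁ γ.fst μ₁ + entF F₂ γ.snd μ₂ + ∫⁻ q, c q.1 q.2 ∂γ : ℝ≥0∞) : EReal) }

/-- The dual feasible set `Λ_M` for the martingale problem. -/
def lamM (c : ↥X → ↥X → EReal) (F₁ F₂ : EntropyFn) : Set ((↥X →ᵇ ℝ) × (↥X →ᵇ ℝ)) :=
  { φ | (∀ x, φ.1 x ∈ interior F₁.circDom) ∧ (∀ x, φ.2 x ∈ interior F₂.circDom) ∧
      ∃ h : ↥X →ᵇ ℝ, ∀ x₁ x₂ : ↥X,
        ((φ.1 x₁ + φ.2 x₂ + h x₁ * ((x₂ : ℝ) - (x₁ : ℝ)) : ℝ) : EReal) ≤ c x₁ x₂ }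

/-- The perspective function `r·F(θ/r)` with the convention `r·F(θ/r) = θ·F'_∞` for `r = 0`. -/
def perspFn (F : EntropyFn) (r θ : ℝ) : ℝ≥0∞ :=
  if r = 0 then ENNReal.ofReal θ * F.recC else ENNReal.ofReal r * F.F (θ / r)

/-- The homogeneous marginal perspective cost `H(x₁,r₁;x₂,r₂)` (the dependence on
`(x₁,x₂)` is through the value `c = c(x₁,x₂)`). -/
def Hcost (F₁ F₂ : EntropyFn) (c : ℝ≥0∞) (r₁ r₂ : ℝ) : ℝ≥0∞ :=
  if c ≠ ∞ then
    ⨅ θ : Ioi (0:ℝ), perspFn F₁ r₁ (θ : ℝ) + perspFn F₂ r₂ (θ : ℝ) + ENNReal.ofReal (θ : ℝ) * c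
  else F₁.F 0 * ENNReal.ofReal r₁ + F₂.F 0 * ENNReal.ofReal r₂

/-- The functional `ℋ(μ₁,μ₂|γ)`. -/
def hMargFun (F₁ F₂ : EntropyFn) (c : ↥X → ↥X → ℝ≥0∞) (μ₁ μ₂ : Measure ↥X)
    (γ : Measure (↥X × ↥X)) : ℝ≥0∞ :=
  (∫⁻ q, Hcost F₁ F₂ (c q.1 q.2) ((μ₁.rnDeriv γ.fst q.1).toReal)
      ((μ₂.rnDeriv γ.snd q.2).toReal) ∂γ)
    + F₁.F 0 * (μ₁.singularPart γ.fst) Set.univ + F₂.F 0 * (μ₂.singularPart γ.snd) Set.univ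

/-- The functional `ℛ(μ₁,μ₂|γ)`. -/
def rMargFun (F₁ F₂ : EntropyFn) (c : ↥X → ↥X → ℝ≥0∞) (μ₁ μ₂ : Measure ↥X)
    (γ : Measure (↥X × ↥X)) : ℝ≥0∞ :=
  revEntF F₁ μ₁ γ.fst + revEntF F₂ μ₂ γ.snd + ∫⁻ q, c q.1 q.2 ∂γ

/-- The first `p`-homogeneous marginal of a measure on `Y × Y`, `Y = X × [0,∞)`. -/
def hMarg1 (p : ℝ) (α : Measure ((↥X × ℝ≥0) × (↥X × ℝ≥0))) : Measure ↥X :=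
  Measure.map (fun q => q.1.1) (α.withDensity fun q => (q.1.2 : ℝ≥0∞) ^ p)

/-- The second `p`-homogeneous marginal of a measure on `Y × Y`, `Y = X × [0,∞)`. -/
def hMarg2 (p : ℝ) (α : Measure ((↥X × ℝ≥0) × (↥X × ℝ≥0))) : Measure ↥X :=
  Measure.map (fun q => q.2.1) (α.withDensity fun q => (q.2.2 : ℝ≥0∞) ^ p)

/-- Membership in the homogeneous constraint set `ℋ^p_{M,≤}(μ₁,μ₂)`. -/
def memHpM (p : ℝ) (μ₁ μ₂ : Measure ↥X) (α : Measure ((↥X × ℝ≥0) × (↥X × ℝ≥0))) : Prop :=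
  IsFiniteMeasure α ∧ (∫⁻ q, (q.1.2 : ℝ≥0∞) ^ p + (q.2.2 : ℝ≥0∞) ^ p ∂α) ≠ ∞ ∧
    hMarg1 p α ≤ μ₁ ∧ hMarg2 p α ≤ μ₂ ∧
    ∀ h : ↥X →ᵇ ℝ, (∫ q, h q.1.1 * ((q.2.1 : ℝ) - (q.1.1 : ℝ)) ∂α) = 0

end Martingale


namespace EntropyFn

def Mino (F : EntropyFn) (q c : ℝ) : Prop :=
  ∀ s : ℝ, 0 ≤ s → F.F s ≠ ∞ → c ≤ q * s + (F.F s).toReal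

def circR (F : EntropyFn) (q : ℝ) : ℝ := (F.circ (q : EReal)).toReal

lemma ereal_coe_toReal {a : ℝ≥0∞} (h : a ≠ ∞) : ((a : ℝ≥0∞) : EReal) = ((a.toReal : ℝ) : EReal) := by
  lift a to ℝ≥0 using h
  rfl

lemma le_circ_iff (F : EntropyFn) (q c : ℝ) : (c : EReal) ≤ F.circ (q : EReal) ↔ F.Mino q c := by
  unfold circ Mino
  rw [le_iInf_iff]
  constructor
  · intro h s hs hF
    have := h ⟨s, hs⟩
    simp only [ereal_coe_toReal hF] at this
    exact_mod_cast this
  · rintro h ⟨s, hs⟩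
    by_cases hF : F.F s = ∞
    · simp only [hF, EReal.coe_ennreal_top]
      rw [← EReal.coe_mul, EReal.coe_add_top]
      exact le_top
    · have := h s hs hF
      simp only [ereal_coe_toReal hF]
      exact_mod_cast this

lemma circ_ne_top (F : EntropyFn) (q : ℝ) : F.circ (q : EReal) ≠ ⊤ := by
  obtain ⟨s, hs, hF⟩ := F.dom
  intro h
  have h1 := (F.le_circ_iff q (q * s + (F.F s).toReal + 1)).1 (by rw [h]; exact le_top) s hs.le hF
  linarith

lemma coe_circR (F : EntropyFn) {q : ℝ} (h : q ∈ F.circDom) :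
    ((F.circR q : ℝ) : EReal) = F.circ (q : EReal) :=
  EReal.coe_toReal (F.circ_ne_top q) h

lemma mem_circDom_iff (F : EntropyFn) (q : ℝ) : q ∈ F.circDom ↔ ∃ c, F.Mino q c := by
  constructor
  · intro h
    exact ⟨F.circR q, (F.le_circ_iff _ _).1 (F.coe_circR h).le⟩
  · rintro ⟨c, hc⟩ h
    have := (F.le_circ_iff q c).2 hc
    rw [h] at this
    exact absurd this (by simp)

lemma mino_circR (F : EntropyFn) {q : ℝ} (h : q ∈ F.circDom) : F.Mino q (F.circR q) :=
  (F.le_circ_iff _ _).1 (F.coe_circR h).le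

lemma le_circR (F : EntropyFn) {q c : ℝ} (h : F.Mino q c) : c ≤ F.circR q := by
  have h1 := (F.le_circ_iff q c).2 h
  rw [← F.coe_circR ((F.mem_circDom_iff q).2 ⟨c, h⟩)] at h1
  exact_mod_cast h1

lemma Mino.mono {F : EntropyFn} {q q' c : ℝ} (h : F.Mino q c) (hq : q ≤ q') : F.Mino q' c := by
  intro s hs hF
  have := h s hs hF
  nlinarith

lemma Mino.combo {F : EntropyFn} {q q' c c' t : ℝ} (h : F.Mino q c) (h' : F.Mino q' c')
    (ht : 0 ≤ t) (ht1 : t ≤ 1) : F.Mino (t * q + (1 - t) * q') (t * c + (1 - t) * c') := by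
  intro s hs hF
  have h1 := mul_le_mul_of_nonneg_left (h s hs hF) ht
  have h2 := mul_le_mul_of_nonneg_left (h' s hs hF) (sub_nonneg.2 ht1)
  nlinarith

/-- interior of the domain -/
def O (F : EntropyFn) : Set ℝ := interior F.circDom

lemma O_sub (F : EntropyFn) : F.O ⊆ F.circDom := interior_subset

lemma circDom_mono (F : EntropyFn) {q q' : ℝ} (h : q ∈ F.circDom) (hq : q ≤ q') :
    q' ∈ F.circDom := by
  rw [mem_circDom_iff] at *
  obtain ⟨c, hc⟩ := h
  exact ⟨c, hc.mono hq⟩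

lemma mem_O_of_lt (F : EntropyFn) {q q' : ℝ} (h : q ∈ F.circDom) (hq : q < q') : q' ∈ F.O := by
  refine mem_interior.2 ⟨Ioi q, fun z hz => F.circDom_mono h (le_of_lt hz), isOpen_Ioi, hq⟩

lemma circDom_convex (F : EntropyFn) : Convex ℝ F.circDom := by
  intro a ha b hb t u ht hu htu
  rw [mem_circDom_iff] at *
  obtain ⟨c, hc⟩ := ha
  obtain ⟨d, hd⟩ := hb
  obtain rfl : u = 1 - t := by linarith
  exact ⟨_, hc.combo hd ht (by linarith)⟩

lemma O_convex (F : EntropyFn) : Convex ℝ F.O := F.circDom_convex.interior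

lemma circR_concave (F : EntropyFn) {q q' t : ℝ} (h : q ∈ F.circDom) (h' : q' ∈ F.circDom)
    (ht : 0 ≤ t) (ht1 : t ≤ 1) :
    t * F.circR q + (1 - t) * F.circR q' ≤ F.circR (t * q + (1 - t) * q') :=
  F.le_circR ((F.mino_circR h).combo (F.mino_circR h') ht ht1)

lemma circR_concaveOn (F : EntropyFn) : ConcaveOn ℝ F.O F.circR := by
  refine ⟨F.O_convex, ?_⟩
  intro a ha b hb t u ht hu htu
  obtain rfl : u = 1 - t := by linarith
  exact F.circR_concave (F.O_sub ha) (F.O_sub hb) ht (by linarith)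

lemma circR_cont (F : EntropyFn) : ContinuousOn F.circR F.O :=
  F.circR_concaveOn.continuousOn isOpen_interior

lemma zero_mem_circDom (F : EntropyFn) : (0:ℝ) ∈ F.circDom := by
  rw [mem_circDom_iff]
  exact ⟨0, fun s hs hF => by simp⟩

lemma pos_mem_O (F : EntropyFn) {q : ℝ} (h : 0 < q) : q ∈ F.O :=
  F.mem_O_of_lt F.zero_mem_circDom h

/-- real convexity -/
lemma conv_real (F : EntropyFn) {a b t : ℝ} (ha : 0 ≤ a) (hb : 0 ≤ b) (hFa : F.F a ≠ ∞)
    (hFb : F.F b ≠ ∞) (ht : 0 ≤ t) (ht1 : t ≤ 1) :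
    F.F (t * a + (1 - t) * b) ≠ ∞ ∧
    (F.F (t * a + (1 - t) * b)).toReal ≤ t * (F.F a).toReal + (1 - t) * (F.F b).toReal := by
  have h := F.convex' a ha b hb t ht ht1
  have h2 : ENNReal.ofReal t * F.F a + ENNReal.ofReal (1 - t) * F.F b ≠ ∞ :=
    ENNReal.add_ne_top.2 ⟨ENNReal.mul_ne_top ENNReal.ofReal_ne_top hFa,
      ENNReal.mul_ne_top ENNReal.ofReal_ne_top hFb⟩
  refine ⟨ne_top_of_le_ne_top h2 h, ?_⟩
  have := ENNReal.toReal_mono h2 h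
  rwa [ENNReal.toReal_add (ENNReal.mul_ne_top ENNReal.ofReal_ne_top hFa)
    (ENNReal.mul_ne_top ENNReal.ofReal_ne_top hFb), ENNReal.toReal_mul, ENNReal.toReal_mul,
    ENNReal.toReal_ofReal ht, ENNReal.toReal_ofReal (sub_nonneg.2 ht1)] at this

lemma neg_le_recC (F : EntropyFn) {q : ℝ} (h : q ∈ F.circDom) :
    ((-q : ℝ) : EReal) ≤ ((F.recC : ℝ≥0∞) : EReal) := by
  obtain ⟨c, hc⟩ := (F.mem_circDom_iff q).1 h
  suffices hh : ENNReal.ofReal (-q) ≤ F.recC by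
    calc ((-q : ℝ) : EReal) ≤ ((ENNReal.ofReal (-q) : ℝ≥0∞) : EReal) := by
          rw [EReal.coe_ennreal_ofReal]; exact_mod_cast le_max_left _ _
      _ ≤ _ := by exact_mod_cast hh
  have key : Tendsto (fun s : ℝ => ENNReal.ofReal (c / s - q)) atTop (𝓝 (ENNReal.ofReal (-q))) := by
    apply ENNReal.tendsto_ofReal
    have : Tendsto (fun s : ℝ => c / s) atTop (𝓝 0) := tendsto_const_nhds.div_atTop tendsto_id
    simpa using this.sub_const q
  unfold recC recessionOf
  rw [← key.limsup_eq]
  refine Filter.limsup_le_limsup ?_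
  · filter_upwards [eventually_gt_atTop (0:ℝ)] with s hs
    rw [ENNReal.le_div_iff_mul_le (by simp [hs]) (by simp), ← ENNReal.ofReal_mul' hs.le]
    by_cases hF : F.F s = ∞
    · simp [hF]
    · apply ENNReal.ofReal_le_of_le_toReal
      have := hc s hs.le hF
      have e : (c / s - q) * s = c - q * s := by field_simp
      rw [e]; linarith

lemma mem_circDom_of_lt (F : EntropyFn) {r : ℝ} (hr : 0 ≤ r) (h : ENNReal.ofReal r < F.recC) :
    -r ∈ F.circDom := by
  obtain ⟨s0, hs0, hF0⟩ := F.dom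
  obtain ⟨r', hr1, hr2⟩ := ENNReal.lt_iff_exists_real_btwn.1 h |>.imp fun a ha => ha.2
  have hrr : r < r' := by
    by_contra hcon
    exact absurd hr1 (not_lt.2 (ENNReal.ofReal_le_ofReal (not_lt.1 hcon)))
  have hfr : ∃ᶠ s in atTop, ENNReal.ofReal r' < F.F s / ENNReal.ofReal s :=
    frequently_lt_of_lt_limsup (by isBoundedDefault) hr2
  set f0 := (F.F s0).toReal
  obtain ⟨s1, hs1, hb⟩ := (hfr.and_eventually
    ((eventually_gt_atTop s0).and (eventually_ge_atTop ((f0 - r * s0) / (r' - r))))).exists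
  obtain ⟨hb1, hb2⟩ := hb
  have hs1pos : 0 < s1 := hs0.trans hb1
  have hq : f0 + r * (s1 - s0) ≤ r' * s1 := by
    rw [div_le_iff₀ (by linarith)] at hb2
    linarith
  have hF1 : ENNReal.ofReal (r' * s1) < F.F s1 := by
    rw [ENNReal.lt_div_iff_mul_lt (by simp [hs1pos]) (by simp)] at hs1
    rwa [ENNReal.ofReal_mul' hs1pos.le]
  have hr1' : F.F s1 ≠ ∞ → r' * s1 ≤ (F.F s1).toReal := by
    intro hne
    exact (ENNReal.ofReal_le_iff_le_toReal hne).1 hF1.le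
  rw [mem_circDom_iff]
  refine ⟨min (f0 - r * s0) (- r * s1), ?_⟩
  intro s hs hF
  by_cases hss : s ≤ s1
  · have h1 : (0:ℝ) ≤ (F.F s).toReal := ENNReal.toReal_nonneg
    have h2 := min_le_right (f0 - r * s0) (- r * s1)
    nlinarith
  · push Not at hss
    set t := (s1 - s0) / (s - s0) with ht
    have hpos : 0 < s - s0 := by linarith
    have ht0 : 0 < t := div_pos (by linarith) hpos
    have ht1 : t ≤ 1 := by rw [ht, div_le_one hpos]; linarith
    have he : t * s + (1 - t) * s0 = s1 := by
      rw [ht]; field_simp; ring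
    have hc := F.conv_real hs hs0.le hF hF0 ht0.le ht1
    rw [he] at hc
    have h3 := hr1' hc.1
    have h4 := hc.2
    have h5 : t * (s - s0) = s1 - s0 := by rw [ht]; field_simp
    have h6 : t * (f0 + r * (s - s0)) ≤ t * (F.F s).toReal := by
      have : t * (f0 + r * (s - s0)) = t * f0 + r * (s1 - s0) := by rw [← h5]; ring
      rw [this]
      have : (1 - t) * f0 = f0 - t * f0 := by ring
      linarith
    have h7 := le_of_mul_le_mul_left h6 ht0
    have h2 := min_le_left (f0 - r * s0) (- r * s1)
    linarith

lemma mem_O_of_recC (F : EntropyFn) {q : ℝ} (h : ((-q : ℝ) : EReal) < ((F.recC : ℝ≥0∞) : EReal)) :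
    q ∈ F.O := by
  by_cases hq : 0 < q
  · exact F.pos_mem_O hq
  push Not at hq
  have h1 : ENNReal.ofReal (-q) < F.recC := by
    have : ((ENNReal.ofReal (-q) : ℝ≥0∞) : EReal) < ((F.recC : ℝ≥0∞) : EReal) := by
      rw [EReal.coe_ennreal_ofReal, max_eq_left (by linarith)]; exact h
    exact_mod_cast this
  obtain ⟨r', hr0, hr1, hr2⟩ := ENNReal.lt_iff_exists_real_btwn.1 h1
  have hrr : -q < r' := by
    by_contra hcon
    exact absurd hr1 (not_lt.2 (ENNReal.ofReal_le_ofReal (not_lt.1 hcon)))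
  exact F.mem_O_of_lt (F.mem_circDom_of_lt hr0 hr2) (by linarith)

end EntropyFn


namespace EntropyFn

lemma bicon (F : EntropyFn) {s c : ℝ} (hs : 0 ≤ s)
    (hc : (c : EReal) < ((F.F s : ℝ≥0∞) : EReal)) : ∃ q ∈ F.O, c < F.circR q - q * s := by
  suffices hh : ∃ q ∈ F.circDom, c < F.circR q - q * s by
    obtain ⟨q, hq, hqc⟩ := hh
    set ε := (F.circR q - q * s - c) / (2 * (s + 1)) with hε
    have hεpos : 0 < ε := div_pos (by linarith) (by linarith)
    refine ⟨q + ε, F.mem_O_of_lt hq (by linarith), ?_⟩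
    have h1 := F.le_circR ((F.mino_circR hq).mono (show q ≤ q + ε by linarith))
    have h2 : ε * (2 * (s + 1)) = F.circR q - q * s - c := by rw [hε]; field_simp
    nlinarith
  let E : Set (ℝ × ℝ) := {z | z.1 ∈ Ici (0:ℝ) ∧ F.F z.1 ≤ ENNReal.ofReal z.2} ∩ {z | 0 ≤ z.2}
  have hEcl : IsClosed E := by
    refine IsClosed.inter ?_ (isClosed_le continuous_const continuous_snd)
    have h1 := (lowerSemicontinuousOn_iff_isClosed_epigraph isClosed_Ici).1 F.lsc
    exact h1.preimage (f := fun z : ℝ × ℝ => (z.1, ENNReal.ofReal z.2))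
      (continuous_fst.prodMk (ENNReal.continuous_ofReal.comp continuous_snd))
  have hmem : ∀ z : ℝ × ℝ, z ∈ E ↔ 0 ≤ z.1 ∧ F.F z.1 ≠ ∞ ∧ (F.F z.1).toReal ≤ z.2 := by
    intro z
    constructor
    · rintro ⟨⟨h1, h2⟩, h3⟩
      exact ⟨h1, ne_top_of_le_ne_top ENNReal.ofReal_ne_top h2,
        ENNReal.toReal_le_of_le_ofReal h3 h2⟩
    · rintro ⟨h1, h2, h3⟩
      exact ⟨⟨h1, (ENNReal.le_ofReal_iff_toReal_le h2 (ENNReal.toReal_nonneg.trans h3)).2 h3⟩,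
        ENNReal.toReal_nonneg.trans h3⟩
  have hEconv : Convex ℝ E := by
    intro a ha b hb t u ht hu htu
    obtain rfl : u = 1 - t := by linarith
    rw [hmem] at *
    have hc := F.conv_real ha.1 hb.1 ha.2.1 hb.2.1 ht (by linarith)
    refine ⟨?_, hc.1, hc.2.trans ?_⟩
    · exact add_nonneg (mul_nonneg ht ha.1) (mul_nonneg hu hb.1)
    · exact add_le_add (mul_le_mul_of_nonneg_left ha.2.2 ht) (mul_le_mul_of_nonneg_left hb.2.2 hu)
  have hnot : (s, c) ∉ E := by
    rw [hmem]
    rintro ⟨_, h2, h3⟩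
    rw [ereal_coe_toReal h2] at hc
    exact absurd hc (not_lt.2 (by exact_mod_cast h3))
  obtain ⟨ℓ, u, hu1, hu2⟩ := geometric_hahn_banach_point_closed hEconv hEcl hnot
  set α := ℓ (1, 0)
  set β := ℓ (0, 1)
  have hℓ : ∀ a b : ℝ, ℓ (a, b) = a * α + b * β := by
    intro a b
    have : ((a, b) : ℝ × ℝ) = a • (1, 0) + b • (0, 1) := by ext <;> simp
    rw [this, map_add, map_smul, map_smul]; rfl
  rw [hℓ] at hu1
  have hE2 : ∀ s' r, 0 ≤ s' → F.F s' ≠ ∞ → (F.F s').toReal ≤ r → u < s' * α + r * β := by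
    intro s' r h1 h2 h3
    rw [← hℓ]
    exact hu2 _ ((hmem _).2 ⟨h1, h2, h3⟩)
  obtain ⟨s0, hs0, hF0⟩ := F.dom
  have hβ : 0 ≤ β := by
    by_contra hneg
    push Not at hneg
    have h1 := hE2 s0 (max (F.F s0).toReal ((u - s0 * α) / β)) hs0.le hF0 (le_max_left _ _)
    have h2 : max (F.F s0).toReal ((u - s0 * α) / β) * β ≤ ((u - s0 * α) / β) * β :=
      mul_le_mul_of_nonpos_right (le_max_right _ _) hneg.le
    rw [div_mul_cancel₀ _ hneg.ne] at h2
    linarith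
  rcases hβ.eq_or_lt with h0 | hpos
  · rw [← h0] at hu1 hE2
    simp only [mul_zero, add_zero] at hu1 hE2
    set d := u - s * α
    have hd : 0 < d := by simp only [d]; linarith
    have hM := F.mino_circR F.zero_mem_circDom
    set k := max 0 ((c + 1 - F.circR 0) / d)
    have hk : 0 ≤ k := le_max_left _ _
    have hk2 : c + 1 - F.circR 0 ≤ k * d := by
      have : (c + 1 - F.circR 0) / d ≤ k := le_max_right _ _
      rwa [div_le_iff₀ hd] at this
    have hm : F.Mino (k * α) (F.circR 0 + k * u) := by
      intro s' hs' hF'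
      have h1 := hM s' hs' hF'
      have h2 := mul_le_mul_of_nonneg_left (hE2 s' _ hs' hF' le_rfl).le hk
      nlinarith
    refine ⟨k * α, (F.mem_circDom_iff _).2 ⟨_, hm⟩, ?_⟩
    have h3 := F.le_circR hm
    have : k * d = k * u - k * α * s := by simp only [d]; ring
    linarith
  · have hm : F.Mino (α / β) (u / β) := by
      intro s' hs' hF'
      have h1 := (hE2 s' _ hs' hF' le_rfl).le
      rw [div_le_iff₀ hpos]
      have : (α / β * s' + (F.F s').toReal) * β = s' * α + (F.F s').toReal * β := by
        field_simp
      linarith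
    refine ⟨α / β, (F.mem_circDom_iff _).2 ⟨_, hm⟩, ?_⟩
    have h3 := F.le_circR hm
    have : c < u / β - α / β * s := by
      rw [div_mul_eq_mul_div, ← sub_div, lt_div_iff₀ hpos]; linarith
    linarith

lemma exists_rat_gt (F : EntropyFn) {s c q : ℝ} (hs : 0 ≤ s) (hq : q ∈ F.O)
    (h : c < F.circR q - q * s) : ∃ q' : ℚ, (q' : ℝ) ∈ F.O ∧ c < F.circR q' - q' * s := by
  set ε := (F.circR q - q * s - c) / (2 * (s + 1)) with hε
  have hεpos : 0 < ε := div_pos (by linarith) (by linarith)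
  have h2 : ε * (2 * (s + 1)) = F.circR q - q * s - c := by rw [hε]; field_simp
  obtain ⟨q', h3, h4⟩ := exists_rat_btwn (show q < q + ε by linarith)
  refine ⟨q', F.mem_O_of_lt (F.O_sub hq) h3, ?_⟩
  have h1 := F.le_circR ((F.mino_circR (F.O_sub hq)).mono h3.le)
  nlinarith

instance (F : EntropyFn) : Nonempty {q : ℚ // (q : ℝ) ∈ F.O} :=
  ⟨⟨1, F.pos_mem_O (by norm_num)⟩⟩

lemma sup_eq (F : EntropyFn) {s : ℝ} (hs : 0 ≤ s) :
    (⨆ q : {q : ℚ // (q : ℝ) ∈ F.O}, ((F.circR (q : ℚ) - (q : ℚ) * s : ℝ) : EReal))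
      = ((F.F s : ℝ≥0∞) : EReal) := by
  apply le_antisymm
  · refine iSup_le ?_
    rintro ⟨q, hq⟩
    by_cases hF : F.F s = ∞
    · simp [hF]
    · rw [ereal_coe_toReal hF]
      have := F.mino_circR (F.O_sub hq) s hs hF
      exact_mod_cast (by linarith : F.circR q - q * s ≤ (F.F s).toReal)
  · refine le_of_forall_lt fun c hc => ?_
    obtain ⟨c', h1, h2⟩ := EReal.lt_iff_exists_real_btwn.1 hc
    obtain ⟨q, hq, hh⟩ := F.bicon hs h2
    obtain ⟨q', hq', hh'⟩ := F.exists_rat_gt hs hq hh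
    exact h1.trans (lt_of_lt_of_le (by exact_mod_cast hh') (le_iSup
      (fun q : {q : ℚ // (q : ℝ) ∈ F.O} => ((F.circR (q : ℚ) - (q : ℚ) * s : ℝ) : EReal)) ⟨q', hq'⟩))

lemma sup_rec (F : EntropyFn) :
    (⨆ q : {q : ℚ // (q : ℝ) ∈ F.O}, ((-((q : ℚ) : ℝ) : ℝ) : EReal))
      = ((F.recC : ℝ≥0∞) : EReal) := by
  apply le_antisymm
  · refine iSup_le ?_
    rintro ⟨q, hq⟩
    exact F.neg_le_recC (F.O_sub hq)
  · refine le_of_forall_lt fun c hc => ?_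
    obtain ⟨c', h1, h2⟩ := EReal.lt_iff_exists_rat_btwn.1 hc
    have : (((-c' : ℚ) : ℝ)) ∈ F.O := F.mem_O_of_recC (by push_cast; rw [neg_neg]; exact h2)
    refine lt_of_lt_of_le ?_ (le_iSup
      (fun q : {q : ℚ // (q : ℝ) ∈ F.O} => ((-((q : ℚ) : ℝ) : ℝ) : EReal)) ⟨-c', this⟩)
    simpa using h1

end EntropyFn


section EInt

lemma posE_eq (a : EReal) : posE a = a.toENNReal := rfl

lemma posE_coe (a : ℝ) : posE (a : EReal) = ENNReal.ofReal a := by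
  simp [posE_eq]

lemma posE_neg_coe (a : ℝ) : posE (-(a : EReal)) = ENNReal.ofReal (-a) := by
  rw [← EReal.coe_neg, posE_coe]

lemma posE_mono {a b : EReal} (h : a ≤ b) : posE a ≤ posE b := EReal.toENNReal_le_toENNReal h

lemma posE_coe_ennreal (a : ℝ≥0∞) : posE (a : EReal) = a := by
  simp [posE_eq]

lemma eIntegral_mono {α : Type*} [MeasurableSpace α] {μ : Measure α} {f g : α → EReal}
    (h : ∀ x, f x ≤ g x) : eIntegral μ f ≤ eIntegral μ g := by
  unfold eIntegral
  apply EReal.sub_le_sub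
  · exact_mod_cast lintegral_mono fun x => posE_mono (h x)
  · exact_mod_cast lintegral_mono fun x => posE_mono (EReal.neg_le_neg_iff.2 (h x))

lemma eIntegral_coe {α : Type*} [MeasurableSpace α] {μ : Measure α} {f : α → ℝ}
    (h : Integrable f μ) : eIntegral μ (fun x => (f x : EReal)) = ((∫ x, f x ∂μ : ℝ) : EReal) := by
  unfold eIntegral
  simp only [posE_coe, posE_neg_coe]
  rw [integral_eq_lintegral_pos_part_sub_lintegral_neg_part h]
  have h1 : ∫⁻ x, ENNReal.ofReal (f x) ∂μ ≠ ∞ := h.lintegral_lt_top.ne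
  have h2 : ∫⁻ x, ENNReal.ofReal (-f x) ∂μ ≠ ∞ := h.neg.lintegral_lt_top.ne
  rw [EntropyFn.ereal_coe_toReal h1, EntropyFn.ereal_coe_toReal h2]
  norm_cast

end EInt

section Sel

variable {X : Type*} [MetricSpace X] [MeasurableSpace X] [BorelSpace X]

lemma exists_theta (m : Measure X) {w : X → ℝ} (hm : Measurable w)
    (hw : Integrable w m) {ε : ℝ} (hε : 0 < ε) :
    ∃ θ : C(X, ℝ), (∀ x, 0 ≤ θ x ∧ θ x ≤ 1) ∧ ∫ x, max (w x) 0 ∂m - ε ≤ ∫ x, θ x * w x ∂m := by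
  set ν := m.withDensity (fun x => ‖w x‖ₑ) with hν
  haveI : IsFiniteMeasure ν := isFiniteMeasure_withDensity hw.2.ne
  let B : Set X := {x | 0 ≤ w x}
  have hB : MeasurableSet B := measurableSet_le measurable_const hm
  have hI : Integrable (B.indicator (fun _ => (1:ℝ))) ν :=
    (integrable_const (1:ℝ)).indicator hB
  obtain ⟨k, hk, -⟩ := hI.exists_boundedContinuous_lintegral_sub_le
    (ε := ENNReal.ofReal ε) (by simpa using hε)
  refine ⟨⟨fun x => max 0 (min 1 (k x)), by fun_prop⟩, fun x => ⟨le_max_left _ _, ?_⟩, ?_⟩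
  · exact max_le zero_le_one (min_le_left _ _)
  have hbd : ∀ x, 0 ≤ max 0 (min 1 (k x)) ∧ max 0 (min 1 (k x)) ≤ 1 := fun x =>
    ⟨le_max_left _ _, max_le zero_le_one (min_le_left _ _)⟩
  have hmk : Measurable fun x => max 0 (min 1 (k x)) := by
    have : Continuous fun x => max 0 (min 1 (k x)) := by fun_prop
    exact this.measurable
  have hi1 : Integrable (fun x => max 0 (min 1 (k x)) * w x) m :=
    hw.bdd_mul (c := 1) hmk.aestronglyMeasurable (Eventually.of_forall fun x => by
      rw [Real.norm_of_nonneg (hbd x).1]; exact (hbd x).2)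
  have hi2 : Integrable (fun x => max (w x) 0) m := hw.pos_part
  show ∫ x, max (w x) 0 ∂m - ε ≤ ∫ x, max 0 (min 1 (k x)) * w x ∂m
  rw [sub_le_comm, ← integral_sub hi2 hi1]
  have hi3 := hi2.sub hi1
  have hlk : ∫⁻ x, ‖B.indicator (fun _ => (1:ℝ)) x - k x‖ₑ * ‖w x‖ₑ ∂m ≤ ENNReal.ofReal ε := by
    rw [hν, lintegral_withDensity_eq_lintegral_mul _ (by fun_prop)] at hk
    · refine le_trans (le_of_eq ?_) hk
      refine lintegral_congr fun x => ?_
      simp [mul_comm]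
    · exact ((measurable_const.indicator hB).sub k.continuous.measurable).enorm
  have hle : ∫⁻ x, ‖max (w x) 0 - max 0 (min 1 (k x)) * w x‖ₑ ∂m ≤ ENNReal.ofReal ε := by
    refine (lintegral_mono fun x => ?_).trans hlk
    rw [← enorm_mul]
    rw [enorm_le_iff_norm_le]
    rw [Real.norm_eq_abs, norm_mul, Real.norm_eq_abs, Real.norm_eq_abs]
    have e : max (w x) 0 = B.indicator (fun _ => (1:ℝ)) x * w x := by
      by_cases hx : 0 ≤ w x
      · simp [B, hx]
      · simp [B, hx, (not_le.1 hx).le]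
    rw [e, ← sub_mul, abs_mul]
    refine mul_le_mul_of_nonneg_right ?_ (abs_nonneg _)
    by_cases hx : x ∈ B
    · simp only [indicator_of_mem hx]
      grind
    · simp only [indicator_of_notMem hx]
      grind
  calc ∫ x, (max (w x) 0 - max 0 (min 1 (k x)) * w x) ∂m
      ≤ ‖∫ x, (max (w x) 0 - max 0 (min 1 (k x)) * w x) ∂m‖ := le_abs_self _
    _ ≤ (∫⁻ x, ENNReal.ofReal ‖max (w x) 0 - max 0 (min 1 (k x)) * w x‖ ∂m).toReal :=
        norm_integral_le_lintegral_norm _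
    _ ≤ ε := by
        simp only [ofReal_norm]
        exact ENNReal.toReal_le_of_le_ofReal hε.le hle

/-- running maxima -/
def runMax {X : Type*} (h : ℕ → X → ℝ) : ℕ → X → ℝ
  | 0 => h 0
  | n + 1 => fun x => max (runMax h n x) (h (n + 1) x)

lemma runMax_meas {X : Type*} [MeasurableSpace X] {h : ℕ → X → ℝ} (hm : ∀ n, Measurable (h n)) (n : ℕ) :
    Measurable (runMax h n) := by
  induction n with
  | zero => exact hm 0
  | succ n ih => exact ih.max (hm (n + 1))

lemma runMax_int {X : Type*} [MeasurableSpace X] {m : Measure X} {h : ℕ → X → ℝ} (hm : ∀ n, Integrable (h n) m) (n : ℕ) :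
    Integrable (runMax h n) m := by
  induction n with
  | zero => exact hm 0
  | succ n ih => exact ih.sup (hm (n + 1))

lemma runMax_mono {X : Type*} (h : ℕ → X → ℝ) (x : X) : Monotone fun n => runMax h n x :=
  monotone_nat_of_le_succ fun n => le_max_left _ _

lemma runMax_ge {X : Type*} (h : ℕ → X → ℝ) (n : ℕ) (x : X) : h n x ≤ runMax h n x := by
  cases n with
  | zero => exact le_rfl
  | succ n => exact le_max_right _ _

lemma runMax_le {X : Type*} (h : ℕ → X → ℝ) (n : ℕ) (x : X) : ∃ k, runMax h n x = h k x := by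
  induction n with
  | zero => exact ⟨0, rfl⟩
  | succ n ih =>
    obtain ⟨k, hk⟩ := ih
    rcases max_choice (runMax h n x) (h (n + 1) x) with h1 | h1
    · exact ⟨k, h1.trans hk⟩
    · exact ⟨n + 1, h1⟩

lemma runMax_sup {X : Type*} (h : ℕ → X → ℝ) (x : X) :
    (⨆ n, (runMax h n x : EReal)) = ⨆ n, (h n x : EReal) := by
  apply le_antisymm
  · refine iSup_le fun n => ?_
    obtain ⟨k, hk⟩ := runMax_le h n x
    rw [hk]
    exact le_iSup (fun n => (h n x : EReal)) k
  · refine iSup_mono fun n => ?_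
    exact_mod_cast runMax_ge h n x

lemma eIntegral_sup_tendsto {X : Type*} [MeasurableSpace X] (m : Measure X) {h : ℕ → X → ℝ}
    (hm : ∀ n, Measurable (h n)) (hi : ∀ n, Integrable (h n) m) :
    Tendsto (fun n => ((∫ x, runMax h n x ∂m : ℝ) : EReal)) atTop
      (𝓝 (eIntegral m fun x => ⨆ n, (h n x : EReal))) := by
  have hpt : ∀ x, Tendsto (fun n => (runMax h n x : EReal)) atTop (𝓝 (⨆ n, (h n x : EReal))) := by
    intro x
    rw [← runMax_sup]
    exact tendsto_atTop_iSup fun a b hab => by exact_mod_cast runMax_mono h x hab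
  have hP : Tendsto (fun n => ∫⁻ x, posE (runMax h n x : EReal) ∂m) atTop
      (𝓝 (∫⁻ x, posE (⨆ n, (h n x : EReal)) ∂m)) := by
    apply lintegral_tendsto_of_tendsto_of_monotone
    · intro n
      simp only [posE_coe]
      exact (runMax_meas hm n).ennreal_ofReal.aemeasurable
    · exact Eventually.of_forall fun x a b hab => posE_mono (by exact_mod_cast runMax_mono h x hab)
    · exact Eventually.of_forall fun x =>
        (EReal.continuous_toENNReal.tendsto _).comp (hpt x)
  have hfin : ∫⁻ x, posE (-(h 0 x : EReal)) ∂m ≠ ∞ := by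
    simp only [posE_neg_coe]
    exact (hi 0).neg.lintegral_lt_top.ne
  have hN : Tendsto (fun n => ∫⁻ x, posE (-(runMax h n x : EReal)) ∂m) atTop
      (𝓝 (∫⁻ x, posE (-(⨆ n, (h n x : EReal))) ∂m)) := by
    apply tendsto_lintegral_of_dominated_convergence (fun x => posE (-(h 0 x : EReal)))
    · intro n
      simp only [posE_neg_coe]
      exact (runMax_meas hm n).neg.ennreal_ofReal
    · intro n
      refine Eventually.of_forall fun x => posE_mono (EReal.neg_le_neg_iff.2 ?_)
      exact_mod_cast runMax_mono h x (Nat.zero_le n)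
    · exact hfin
    · exact Eventually.of_forall fun x =>
        (EReal.continuous_toENNReal.tendsto _).comp ((continuous_neg.tendsto _).comp (hpt x))
  have hNfin : ∫⁻ x, posE (-(⨆ n, (h n x : EReal))) ∂m ≠ ∞ := by
    refine ne_top_of_le_ne_top hfin (lintegral_mono fun x => posE_mono (EReal.neg_le_neg_iff.2 ?_))
    exact le_iSup (fun n => (h n x : EReal)) 0
  have hEq : ∀ n, ((∫ x, runMax h n x ∂m : ℝ) : EReal)
      = eIntegral m (fun x => (runMax h n x : EReal)) := fun n =>
    (eIntegral_coe (runMax_int hi n)).symm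
  simp only [hEq]
  unfold eIntegral
  simp only [sub_eq_add_neg]
  have hP' := (continuous_coe_ennreal_ereal.tendsto _).comp hP
  have hN' := (continuous_neg.tendsto _).comp ((continuous_coe_ennreal_ereal.tendsto _).comp hN)
  refine (EReal.continuousAt_add (p := (_, _)) ?_ ?_).tendsto.comp (hP'.prodMk_nhds hN')
  · right
    simpa using hNfin
  · left
    simp

lemma sel_two (m : Measure X) [IsFiniteMeasure m] (G : Set (X → ℝ))
    (hGm : ∀ g ∈ G, Measurable g) (hGi : ∀ g ∈ G, Integrable g m)
    (hG : ∀ g ∈ G, ∀ g' ∈ G, ∀ θ : C(X, ℝ), (∀ x, 0 ≤ θ x ∧ θ x ≤ 1) →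
      (fun x => θ x * g x + (1 - θ x) * g' x) ∈ G)
    {g g' : X → ℝ} (hg : g ∈ G) (hg' : g' ∈ G) {ε : ℝ} (hε : 0 < ε) :
    ∃ k ∈ G, (∀ x, k x ≤ max (g x) (g' x)) ∧ ∫ x, max (g x) (g' x) ∂m - ε ≤ ∫ x, k x ∂m := by
  have hwi := (hGi g hg).sub (hGi g' hg')
  obtain ⟨θ, h1, h2⟩ := exists_theta m ((hGm g hg).sub (hGm g' hg'))
    hwi hε
  refine ⟨_, hG g hg g' hg' θ h1, fun x => ?_, ?_⟩
  · have := h1 x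
    nlinarith [le_max_left (g x) (g' x), le_max_right (g x) (g' x)]
  · have hi1 : Integrable (fun x => θ x * (g - g') x) m :=
      hwi.bdd_mul (c := 1) θ.continuous.aestronglyMeasurable (Eventually.of_forall fun x => by
        rw [Real.norm_of_nonneg (h1 x).1]; exact (h1 x).2)
    have e1 : ∀ x, θ x * g x + (1 - θ x) * g' x = θ x * (g - g') x + g' x := by
      intro x; simp only [Pi.sub_apply]; ring
    have e2 : ∀ x, max (g x) (g' x) = max ((g - g') x) 0 + g' x := by
      intro x; simp only [Pi.sub_apply]; rw [← max_add_add_right]; simp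
    simp only [e1, e2]
    rw [integral_add hi1 (hGi g' hg'), integral_add hwi.pos_part (hGi g' hg')]
    linarith

lemma sel_main (m : Measure X) [IsFiniteMeasure m] (G : Set (X → ℝ))
    (hGm : ∀ g ∈ G, Measurable g) (hGi : ∀ g ∈ G, Integrable g m)
    (hG : ∀ g ∈ G, ∀ g' ∈ G, ∀ θ : C(X, ℝ), (∀ x, 0 ≤ θ x ∧ θ x ≤ 1) →
      (fun x => θ x * g x + (1 - θ x) * g' x) ∈ G)
    (h : ℕ → X → ℝ) (hh : ∀ n, h n ∈ G) {c : ℝ}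
    (hc : (c : EReal) < eIntegral m fun x => ⨆ n, (h n x : EReal)) :
    ∃ g ∈ G, c < ∫ x, g x ∂m := by
  have hi := fun n => hGi _ (hh n)
  have key : ∀ n, ∀ ε : ℝ, 0 < ε → ∃ g ∈ G, (∀ x, g x ≤ runMax h n x) ∧
      ∫ x, runMax h n x ∂m - ε ≤ ∫ x, g x ∂m := by
    intro n
    induction n with
    | zero => exact fun ε hε => ⟨h 0, hh 0, fun x => le_rfl, by simp only [runMax]; linarith⟩
    | succ n ih =>
      intro ε hε
      obtain ⟨g, hg, hgle, hgi⟩ := ih (ε / 2) (by linarith)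
      obtain ⟨k, hk, hkle, hki⟩ := sel_two m G hGm hGi hG hg (hh (n + 1)) (half_pos hε)
      refine ⟨k, hk, fun x => (hkle x).trans (max_le_max (hgle x) le_rfl), ?_⟩
      have h1 : ∫ x, (runMax h (n + 1) x - max (g x) (h (n + 1) x)) ∂m
          ≤ ∫ x, (runMax h n x - g x) ∂m := by
        apply integral_mono ((runMax_int hi (n + 1)).sub ((hGi g hg).sup (hi (n + 1))))
          ((runMax_int hi n).sub (hGi g hg))
        intro x
        have h0 : ∀ a b c : ℝ, c ≤ a → max a b - max c b ≤ a - c := by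
          intro a b c hca
          rcases le_total a b with h1 | h1 <;> rcases le_total c b with h2 | h2 <;>
            simp only [max_eq_left, max_eq_right, h1, h2] <;> linarith
        exact h0 _ _ _ (hgle x)
      have e1 := integral_sub (runMax_int hi (n + 1)) ((hGi g hg).sup (hi (n + 1)))
      have e2 := integral_sub (runMax_int hi n) (hGi g hg)
      have e3 : ∫ x, (g ⊔ h (n + 1)) x ∂m = ∫ x, max (g x) (h (n + 1) x) ∂m := rfl
      have e4 : ∫ x, (runMax h (n + 1) x - (g ⊔ h (n + 1)) x) ∂m
        = ∫ x, (runMax h (n + 1) x - max (g x) (h (n + 1) x)) ∂m := rfl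
      rw [e2, ← e4, e1, e3] at h1
      linarith
  have ht := eIntegral_sup_tendsto m (fun n => hGm _ (hh n)) hi
  obtain ⟨n, hn⟩ := (ht.eventually (lt_mem_nhds hc)).exists
  have hn' : c < ∫ x, runMax h n x ∂m := by exact_mod_cast hn
  obtain ⟨g, hg, -, h3⟩ := key n ((∫ x, runMax h n x ∂m - c) / 2) (by linarith)
  exact ⟨g, hg, by linarith⟩

end Sel


section Ent

variable {X : Type*} [MetricSpace X] [CompactSpace X] [MeasurableSpace X] [BorelSpace X]

open EntropyFn

/-- integrand associated with a potential -/
def gphi {X : Type*} (F : EntropyFn) (f : X → ℝ) (S : Set X) (φ : X → ℝ) (x : X) : ℝ :=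
  open Classical in if x ∈ S then -φ x else F.circR (φ x) - φ x * f x

lemma circR_comp_cont {X : Type*} [TopologicalSpace X] (F : EntropyFn) (φ : C(X, ℝ)) (hφ : ∀ x, φ x ∈ F.O) :
    Continuous fun x => F.circR (φ x) :=
  F.circR_cont.comp_continuous φ.continuous hφ

lemma cont_integrable (m : Measure X) [IsFiniteMeasure m] {f : X → ℝ} (hf : Continuous f) :
    Integrable f m :=
  (BoundedContinuousFunction.mkOfCompact ⟨f, hf⟩).integrable m

lemma ent_setup {X : Type*} [MeasurableSpace X] (γ μ : Measure X) :
    ∃ S : Set X, MeasurableSet S ∧ (∀ᵐ x ∂μ, x ∉ S) ∧ (∀ᵐ x ∂(γ.singularPart μ), x ∈ S) := by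
  obtain ⟨T, hT, h1, h2⟩ := Measure.mutuallySingular_singularPart γ μ
  refine ⟨Tᶜ, hT.compl, ?_, ?_⟩
  · exact (measure_eq_zero_iff_ae_notMem (s := Tᶜ)).1 h2
  · rw [ae_iff]; simpa using h1

lemma gphi_meas (F : EntropyFn) {f : X → ℝ} (hf : Measurable f) {S : Set X}
    (hS : MeasurableSet S) (φ : C(X, ℝ)) (hφ : ∀ x, φ x ∈ F.O) : Measurable (gphi F f S φ) := by
  unfold gphi
  classical
  exact Measurable.ite hS φ.continuous.measurable.neg
    ((circR_comp_cont F φ hφ).measurable.sub (φ.continuous.measurable.mul hf))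

lemma gphi_int (F : EntropyFn) (γ μ : Measure X) [IsFiniteMeasure γ] [IsFiniteMeasure μ]
    {S : Set X} (h1 : ∀ᵐ x ∂μ, x ∉ S) (h2 : ∀ᵐ x ∂(γ.singularPart μ), x ∈ S)
    (φ : C(X, ℝ)) (hφ : ∀ x, φ x ∈ F.O) :
    Integrable (gphi F (fun x => (γ.rnDeriv μ x).toReal) S φ) (μ + γ.singularPart μ) ∧
    ∫ x, gphi F (fun x => (γ.rnDeriv μ x).toReal) S φ x ∂(μ + γ.singularPart μ)
      = ∫ x, F.circR (φ x) ∂μ - ∫ x, φ x ∂γ := by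
  set σ := γ.singularPart μ
  have e1 : gphi F (fun x => (γ.rnDeriv μ x).toReal) S φ =ᵐ[μ]
      fun x => F.circR (φ x) - φ x * (γ.rnDeriv μ x).toReal := by
    filter_upwards [h1] with x hx
    simp [gphi, hx]
  have e2 : gphi F (fun x => (γ.rnDeriv μ x).toReal) S φ =ᵐ[σ] fun x => - φ x := by
    filter_upwards [h2] with x hx
    simp [gphi, hx]
  have hfi : Integrable (fun x => (γ.rnDeriv μ x).toReal) μ := Measure.integrable_toReal_rnDeriv
  have hc := cont_integrable μ (circR_comp_cont F φ hφ)
  have hpf : Integrable (fun x => φ x * (γ.rnDeriv μ x).toReal) μ :=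
    hfi.bdd_mul (c := ‖φ‖) φ.continuous.aestronglyMeasurable
      (Eventually.of_forall fun x => φ.norm_coe_le_norm x)
  have i1 := (hc.sub hpf).congr e1.symm
  have i2 := ((cont_integrable σ φ.continuous).neg).congr e2.symm
  refine ⟨i1.add_measure i2, ?_⟩
  rw [integral_add_measure i1 i2, integral_congr_ae e1, integral_congr_ae e2,
    integral_sub hc hpf, integral_neg]
  have hd : ∫ x, φ x ∂γ = ∫ x, φ x ∂σ + ∫ x, φ x * (γ.rnDeriv μ x).toReal ∂μ := by
    conv_lhs => rw [Measure.haveLebesgueDecomposition_add γ μ]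
    rw [integral_add_measure (cont_integrable _ φ.continuous)]
    · congr 1
      rw [integral_withDensity_eq_integral_toReal_smul (Measure.measurable_rnDeriv _ _)
        (Measure.rnDeriv_lt_top γ μ)]
      simp [mul_comm]
    · have : IsFiniteMeasure (μ.withDensity (γ.rnDeriv μ)) := inferInstance
      exact cont_integrable _ φ.continuous
  rw [hd]; ring

/-- the entropy integrand -/
def entJ {X : Type*} (F : EntropyFn) (f : X → ℝ) (S : Set X) (x : X) : ℝ≥0∞ :=
  open Classical in if x ∈ S then F.recC else F.F (f x)

lemma entJ_int {X : Type*} [MeasurableSpace X] (F : EntropyFn) (γ μ : Measure X)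
    {S : Set X} (h1 : ∀ᵐ x ∂μ, x ∉ S) (h2 : ∀ᵐ x ∂(γ.singularPart μ), x ∈ S) :
    eIntegral (μ + γ.singularPart μ)
      (fun x => (entJ F (fun x => (γ.rnDeriv μ x).toReal) S x : EReal)) = entF F γ μ := by
  unfold eIntegral
  have e0 : ∀ a : ℝ≥0∞, posE (-(a : EReal)) = 0 := by
    intro a
    rw [posE_eq, EReal.toENNReal_of_nonpos]
    simpa using EReal.coe_ennreal_nonneg a
  simp only [posE_coe_ennreal, e0]
  rw [lintegral_add_measure]
  unfold entF
  have e1 : ∫⁻ x, entJ F (fun x => (γ.rnDeriv μ x).toReal) S x ∂μ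
      = ∫⁻ x, F.F ((γ.rnDeriv μ x).toReal) ∂μ := by
    apply lintegral_congr_ae
    filter_upwards [h1] with x hx
    simp [entJ, hx]
  have e2 : ∫⁻ x, entJ F (fun x => (γ.rnDeriv μ x).toReal) S x ∂(γ.singularPart μ)
      = F.recC * (γ.singularPart μ) univ := by
    rw [← lintegral_const]
    apply lintegral_congr_ae
    filter_upwards [h2] with x hx
    simp [entJ, hx]
  rw [e1, e2]
  simp

lemma gphi_le {X : Type*} (F : EntropyFn) {f : X → ℝ} (hf : ∀ x, 0 ≤ f x) (S : Set X)
    (φ : X → ℝ) (hφ : ∀ x, φ x ∈ F.O) (x : X) :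
    (gphi F f S φ x : EReal) ≤ (entJ F f S x : EReal) := by
  unfold gphi entJ
  split_ifs with h
  · exact F.neg_le_recC (F.O_sub (hφ x))
  · by_cases ht : F.F (f x) = ∞
    · simp [ht]
    · rw [ereal_coe_toReal ht]
      have := F.mino_circR (F.O_sub (hφ x)) (f x) (hf x) ht
      exact_mod_cast (by linarith : F.circR (φ x) - φ x * f x ≤ (F.F (f x)).toReal)

lemma ent_weak (F : EntropyFn) (γ μ : Measure X) [IsFiniteMeasure γ] [IsFiniteMeasure μ]
    (φ : C(X, ℝ)) (hφ : ∀ x, φ x ∈ F.O) :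
    ((∫ x, F.circR (φ x) ∂μ - ∫ x, φ x ∂γ : ℝ) : EReal) ≤ entF F γ μ := by
  obtain ⟨S, hS, h1, h2⟩ := ent_setup γ μ
  obtain ⟨i, e⟩ := gphi_int F γ μ h1 h2 φ hφ
  rw [← e, ← entJ_int F γ μ h1 h2, ← eIntegral_coe i]
  exact eIntegral_mono fun x => gphi_le F (fun x => ENNReal.toReal_nonneg) S φ hφ x

lemma ent_strong (F : EntropyFn) (γ μ : Measure X) [IsFiniteMeasure γ] [IsFiniteMeasure μ]
    {c : ℝ} (hc : (c : EReal) < entF F γ μ) :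
    ∃ φ : C(X, ℝ), (∀ x, φ x ∈ F.O) ∧ c < ∫ x, F.circR (φ x) ∂μ - ∫ x, φ x ∂γ := by
  obtain ⟨S, hS, h1, h2⟩ := ent_setup γ μ
  set f : X → ℝ := fun x => (γ.rnDeriv μ x).toReal with hf
  have hfm : Measurable f := (Measure.measurable_rnDeriv _ _).ennreal_toReal
  let G : Set (X → ℝ) := {g | Measurable g ∧ Integrable g (μ + γ.singularPart μ) ∧
    ∃ φ : C(X, ℝ), (∀ x, φ x ∈ F.O) ∧ ∀ x, g x ≤ gphi F f S φ x}
  obtain ⟨e, he⟩ := exists_surjective_nat {q : ℚ // (q : ℝ) ∈ F.O}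
  have hJ : ∀ x, (⨆ n, (gphi F f S (fun _ => ((e n : ℚ) : ℝ)) x : EReal)) = entJ F f S x := by
    intro x
    unfold entJ gphi
    split_ifs with h
    · rw [← F.sup_rec]
      exact he.iSup_comp (fun q : {q : ℚ // (q : ℝ) ∈ F.O} => ((-(q : ℚ) : ℝ) : EReal))
    · rw [← F.sup_eq ENNReal.toReal_nonneg]
      exact he.iSup_comp (fun q : {q : ℚ // (q : ℝ) ∈ F.O} =>
        ((F.circR (q : ℚ) - (q : ℚ) * f x : ℝ) : EReal))
  rw [← entJ_int F γ μ h1 h2] at hc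
  simp only [← hf, ← hJ] at hc
  have hGmem : ∀ φ : C(X, ℝ), (∀ x, φ x ∈ F.O) → gphi F f S φ ∈ G := fun φ hφ =>
    ⟨gphi_meas F hfm hS φ hφ, (gphi_int F γ μ h1 h2 φ hφ).1, φ, hφ, fun x => le_rfl⟩
  have hGG : ∀ g ∈ G, ∀ g' ∈ G, ∀ θ : C(X, ℝ), (∀ x, 0 ≤ θ x ∧ θ x ≤ 1) →
      (fun x => θ x * g x + (1 - θ x) * g' x) ∈ G := by
    rintro g ⟨hgm, hgi, φ, hφ, hle⟩ g' ⟨hgm', hgi', φ', hφ', hle'⟩ θ hθ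
    have hb : ∀ x, ‖θ x‖ ≤ 1 := fun x => by rw [Real.norm_of_nonneg (hθ x).1]; exact (hθ x).2
    have hb' : ∀ x, ‖1 - θ x‖ ≤ 1 := fun x => by
      rw [Real.norm_of_nonneg (by linarith [(hθ x).2])]; linarith [(hθ x).1]
    refine ⟨?_, ?_, θ * φ + (1 - θ) * φ', ?_, ?_⟩
    · have := θ.continuous.measurable
      fun_prop
    · exact (hgi.bdd_mul (c := 1) θ.continuous.aestronglyMeasurable (Eventually.of_forall hb)).add
        (hgi'.bdd_mul (c := 1) (continuous_const.sub θ.continuous).aestronglyMeasurable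
          (Eventually.of_forall hb'))
    · intro x
      have hcv : θ x • φ x + (1 - θ x) • φ' x ∈ F.O :=
        F.O_convex (hφ x) (hφ' x) (hθ x).1 (by linarith [(hθ x).2]) (by ring)
      exact hcv
    · intro x
      have a1 := mul_le_mul_of_nonneg_left (hle x) (hθ x).1
      have a2 := mul_le_mul_of_nonneg_left (hle' x) (sub_nonneg.2 (hθ x).2)
      refine (add_le_add a1 a2).trans ?_
      have := F.circR_concave (F.O_sub (hφ x)) (F.O_sub (hφ' x)) (hθ x).1 (hθ x).2
      unfold gphi
      simp only [ContinuousMap.add_apply, ContinuousMap.mul_apply, ContinuousMap.sub_apply,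
        ContinuousMap.one_apply]
      split_ifs
      · linarith
      · nlinarith
  obtain ⟨g, ⟨hgm, hgi, φ, hφ, hle⟩, hg⟩ := sel_main (μ + γ.singularPart μ) G (fun g hg => hg.1)
    (fun g hg => hg.2.1) hGG (fun n => gphi F f S (fun _ => ((e n : ℚ) : ℝ)))
    (fun n => hGmem (ContinuousMap.const X ((e n : ℚ) : ℝ)) fun x => (e n).2) hc
  · refine ⟨φ, hφ, hg.trans_le ?_⟩
    obtain ⟨i, ei⟩ := gphi_int F γ μ h1 h2 φ hφ
    rw [← ei]
    exact integral_mono hgi i hle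

end Ent

section Cost

variable {Y : Type*} [MetricSpace Y] [CompactSpace Y] [MeasurableSpace Y] [BorelSpace Y]

/-- convexity of a function of a probability measure -/
def PConv {Y : Type*} [MeasurableSpace Y] (Φ : ProbabilityMeasure Y → EReal) : Prop :=
  ∀ (p q m : ProbabilityMeasure Y) (t : ℝ), 0 ≤ t → t ≤ 1 →
      (m : Measure Y) = ENNReal.ofReal t • (p : Measure Y)
          + ENNReal.ofReal (1 - t) • (q : Measure Y) →
      Φ m ≤ (t : EReal) * Φ p + ((1 - t : ℝ) : EReal) * Φ q

lemma exists_mix {Y : Type*} [MeasurableSpace Y] (p q : ProbabilityMeasure Y) {t : ℝ} (h0 : 0 ≤ t)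
    (h1 : t ≤ 1) : ∃ m : ProbabilityMeasure Y, (m : Measure Y) = ENNReal.ofReal t • (p : Measure Y)
          + ENNReal.ofReal (1 - t) • (q : Measure Y) := by
  refine ⟨⟨_, ⟨?_⟩⟩, rfl⟩
  simp only [Measure.coe_add, Measure.coe_smul, Pi.add_apply, Pi.smul_apply, measure_univ,
    smul_eq_mul, mul_one]
  rw [← ENNReal.ofReal_add h0 (by linarith)]
  simp

lemma integral_mix (p q m : Measure Y) [IsFiniteMeasure p] [IsFiniteMeasure q] {t : ℝ} (h0 : 0 ≤ t)
    (h1 : t ≤ 1) (hm : m = ENNReal.ofReal t • p + ENNReal.ofReal (1 - t) • q) (ψ : C(Y, ℝ)) :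
    ∫ y, ψ y ∂m = t * ∫ y, ψ y ∂p + (1 - t) * ∫ y, ψ y ∂q := by
  rw [hm, integral_add_measure, integral_smul_measure, integral_smul_measure,
    ENNReal.toReal_ofReal h0, ENNReal.toReal_ofReal (by linarith)]
  · rfl
  · exact (cont_integrable p ψ.continuous).smul_measure ENNReal.ofReal_ne_top
  · exact (cont_integrable q ψ.continuous).smul_measure ENNReal.ofReal_ne_top

lemma costD_fin (Φ : ProbabilityMeasure Y → EReal) (hl : LowerSemicontinuous Φ) {K : ℝ}
    (hK : ∀ p, (K : EReal) ≤ Φ p) (p0 : ProbabilityMeasure Y) {c : ℝ} (hc : (c : EReal) < Φ p0) :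
    ∃ u : Finset C(Y, ℝ), ∀ q : ProbabilityMeasure Y, ∃ ψ ∈ u,
      ((c + (∫ y, ψ y ∂(q : Measure Y) - ∫ y, ψ y ∂(p0 : Measure Y)) : ℝ) : EReal) < Φ q := by
  let A : C(Y, ℝ) → Set (ProbabilityMeasure Y) := fun ψ =>
    {q | Φ q ≤ ((c + (∫ y, ψ y ∂(q : Measure Y) - ∫ y, ψ y ∂(p0 : Measure Y)) : ℝ) : EReal)}
  have hA : ∀ ψ, IsClosed (A ψ) := by
    intro ψ
    have hcont : Continuous fun q : ProbabilityMeasure Y => (q,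
      ((c + (∫ y, ψ y ∂(q : Measure Y) - ∫ y, ψ y ∂(p0 : Measure Y)) : ℝ) : EReal)) := by
      have := ProbabilityMeasure.continuous_integral_continuousMap (X := Y) ψ
      exact continuous_id.prodMk (continuous_coe_real_ereal.comp
        (continuous_const.add (this.sub continuous_const)))
    exact hl.isClosed_epigraph.preimage hcont
  have hemp : (univ ∩ ⋂ ψ, A ψ) = ∅ := by
    rw [univ_inter, eq_empty_iff_forall_notMem]
    intro q hq
    rw [mem_iInter] at hq
    have hz : ∀ ψ : C(Y, ℝ), ∫ y, ψ y ∂(q : Measure Y) = ∫ y, ψ y ∂(p0 : Measure Y) := by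
      intro ψ
      by_contra hne
      set d := ∫ y, ψ y ∂(q : Measure Y) - ∫ y, ψ y ∂(p0 : Measure Y) with hd
      have hd0 : d ≠ 0 := sub_ne_zero.2 hne
      have h1 := (hK q).trans (hq (((K - c - 1) / d) • ψ))
      have h2 : K ≤ c + (∫ y, (((K - c - 1) / d) • ψ) y ∂(q : Measure Y)
        - ∫ y, (((K - c - 1) / d) • ψ) y ∂(p0 : Measure Y)) := by exact_mod_cast h1
      simp only [ContinuousMap.smul_apply, smul_eq_mul, integral_const_mul] at h2
      rw [← mul_sub, ← hd, div_mul_cancel₀ _ hd0] at h2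
      linarith
    have hqp : q = p0 := by
      apply Subtype.ext
      have hp0 : IsFiniteMeasure (p0 : Measure Y) := inferInstance
      have hq0 : IsFiniteMeasure (q : Measure Y) := inferInstance
      refine @ext_of_forall_integral_eq_of_IsFiniteMeasure Y _ _ _ _ _ _ hq0 hp0 ?_
      intro f
      exact hz f.toContinuousMap
    have h3 := hq 0
    rw [hqp] at h3
    have h4 : Φ p0 ≤ (c : EReal) := by simpa [A] using h3
    exact absurd hc (not_lt.2 h4)
  obtain ⟨u, hu⟩ := isCompact_univ.elim_finite_subfamily_closed A hA hemp
  refine ⟨u, fun q => ?_⟩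
  by_contra hcon
  push Not at hcon
  have : q ∈ (univ ∩ ⋂ i ∈ u, A i) := ⟨trivial, mem_iInter₂.2 fun ψ hψ => hcon ψ hψ⟩
  rw [hu] at this
  exact this

lemma costD (Φ : ProbabilityMeasure Y → EReal) (hl : LowerSemicontinuous Φ) {K : ℝ}
    (hK : ∀ p, (K : EReal) ≤ Φ p) (hcv : PConv Φ)
    (p0 : ProbabilityMeasure Y) {c : ℝ} (hc : (c : EReal) < Φ p0) :
    ∃ (ψ : C(Y, ℝ)) (b : ℝ), c < b + ∫ y, ψ y ∂(p0 : Measure Y) ∧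
      ∀ q : ProbabilityMeasure Y, ((b + ∫ y, ψ y ∂(q : Measure Y) : ℝ) : EReal) ≤ Φ q := by
  classical
  by_cases htop : ∀ q, Φ q = ⊤
  · exact ⟨0, c + 1, by simp, fun q => by simp [htop]⟩
  push Not at htop
  obtain ⟨q1, hq1⟩ := htop
  obtain ⟨c', hcc', hc'⟩ := EReal.lt_iff_exists_real_btwn.1 hc
  have hcc : c < c' := by exact_mod_cast hcc'
  obtain ⟨u, hu⟩ := costD_fin Φ hl hK p0 hc'
  let D : ProbabilityMeasure Y → C(Y, ℝ) → ℝ := fun q ψ =>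
    ∫ y, ψ y ∂(q : Measure Y) - ∫ y, ψ y ∂(p0 : Measure Y)
  let S : Set (u → ℝ) := {z | ∃ (q : ProbabilityMeasure Y) (r : ℝ), Φ q ≤ (r : EReal) ∧
    ∀ i : u, r - D q i < z i}
  have hSo : IsOpen S := by
    have : S = ⋃ (q : ProbabilityMeasure Y) (r : ℝ) (_ : Φ q ≤ (r : EReal)),
        ⋂ i : u, {z : u → ℝ | r - D q i < z i} := by
      ext z; simp [S]
    rw [this]
    refine isOpen_iUnion fun q => isOpen_iUnion fun r => isOpen_iUnion fun _ =>
      isOpen_iInter_of_finite fun i => isOpen_lt continuous_const (continuous_apply i)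
  have hSc : Convex ℝ S := by
    rintro z ⟨q, r, hqr, hz⟩ z' ⟨q', r', hqr', hz'⟩ t s ht hs hts
    obtain rfl : s = 1 - t := by linarith
    have ht1 : t ≤ 1 := by linarith
    obtain ⟨m, hm⟩ := exists_mix q q' ht ht1
    refine ⟨m, t * r + (1 - t) * r', ?_, fun i => ?_⟩
    · refine (hcv q q' m t ht ht1 hm).trans ?_
      rw [EReal.coe_add, EReal.coe_mul, EReal.coe_mul]
      exact add_le_add (mul_le_mul_of_nonneg_left hqr (by exact_mod_cast ht))
        (mul_le_mul_of_nonneg_left hqr' (by exact_mod_cast hs))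
    · have e : D m i = t * D q i + (1 - t) * D q' i := by
        simp only [D]
        rw [integral_mix _ _ _ ht ht1 hm]; ring
      rw [e]
      simp only [Pi.add_apply, Pi.smul_apply, smul_eq_mul]
      have h1 := hz i
      have h2 := hz' i
      rcases eq_or_lt_of_le ht with h0 | h0
      · subst h0; linarith
      · nlinarith [mul_lt_mul_of_pos_left h1 h0, mul_le_mul_of_nonneg_left h2.le hs]
  have hnot : (fun _ : u => c') ∉ S := by
    rintro ⟨q, r, hqr, hz⟩
    obtain ⟨ψ, hψ, h1⟩ := hu q
    have h2 := h1.trans_le hqr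
    have h3 : c' + (∫ y, ψ y ∂(q : Measure Y) - ∫ y, ψ y ∂(p0 : Measure Y)) < r := by
      exact_mod_cast h2
    have h4 := hz ⟨ψ, hψ⟩
    simp only [D] at h4
    linarith
  obtain ⟨f, hf⟩ := geometric_hahn_banach_point_open hSc hSo hnot
  let w : u → ℝ := fun i => f fun j => if i = j then 1 else 0
  have hfw : ∀ z, f z = ∑ i, z i * w i := fun z =>
    LinearMap.pi_apply_eq_sum_univ f.toLinearMap z
  have hr1 : Φ q1 ≤ ((Φ q1).toReal : EReal) := EReal.le_coe_toReal hq1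
  let z1 : u → ℝ := fun i => (Φ q1).toReal - D q1 i + 1
  have hz1 : z1 ∈ S := ⟨q1, _, hr1, fun i => by simp [z1]⟩
  have hw0 : ∀ i, 0 ≤ w i := by
    intro i
    by_contra hneg
    push Not at hneg
    have hA : ∀ t : ℝ, 0 ≤ t → f (fun _ => c') < f z1 + t * w i := by
      intro t ht
      have h1 : z1 + t • (fun j => if i = j then (1:ℝ) else 0) ∈ S := by
        refine ⟨q1, _, hr1, fun j => ?_⟩
        simp only [Pi.add_apply, Pi.smul_apply, smul_eq_mul, z1]
        split_ifs <;> linarith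
      have h2 := hf _ h1
      rwa [map_add, map_smul, smul_eq_mul] at h2
    have h1 := hf z1 hz1
    have := hA ((f z1 - f (fun _ => c')) / (-(w i))) (div_nonneg (by linarith) (by linarith))
    rw [div_mul_eq_mul_div, div_neg, mul_div_assoc, div_self hneg.ne] at this
    linarith
  have hW : 0 < ∑ i, w i := by
    rcases (Finset.sum_nonneg fun i _ => hw0 i).lt_or_eq with h | h
    · exact h
    · exfalso
      have h0 : ∀ i, w i = 0 := fun i =>
        (Finset.sum_eq_zero_iff_of_nonneg fun i _ => hw0 i).1 h.symm i (Finset.mem_univ i)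
      have h1 := hf z1 hz1
      rw [hfw, hfw] at h1
      simp [h0] at h1
  set W := ∑ i, w i with hWd
  have hkey : ∀ q (r : ℝ), Φ q ≤ (r : EReal) → c' * W + ∑ i : u, w i * D q i ≤ r * W := by
    intro q r hqr
    apply le_of_forall_pos_lt_add
    intro ε hε
    have h1 := hf (fun i => r - D q i + ε / W) ⟨q, r, hqr, fun i => by
      have := div_pos hε hW
      linarith⟩
    rw [hfw, hfw] at h1
    have e1 : ∑ i, c' * w i = c' * W := by rw [hWd, Finset.mul_sum]
    have e2 : ∑ i : u, (r - D q i + ε / W) * w i = r * W - ∑ i : u, w i * D q i + ε := by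
      have : ε = ε / W * W := by field_simp
      conv_rhs => rw [this, hWd, Finset.mul_sum, Finset.mul_sum, ← Finset.sum_sub_distrib,
        ← Finset.sum_add_distrib]
      refine Finset.sum_congr rfl fun i _ => ?_
      rw [← hWd]; ring
    rw [e1, e2] at h1
    linarith
  let ψ : C(Y, ℝ) := W⁻¹ • ∑ i : u, w i • (i : C(Y, ℝ))
  have hψ : ∀ q : ProbabilityMeasure Y, ∫ y, ψ y ∂(q : Measure Y)
      = W⁻¹ * ∑ i : u, w i * ∫ y, (i : C(Y, ℝ)) y ∂(q : Measure Y) := by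
    intro q
    simp only [ψ, ContinuousMap.smul_apply, ContinuousMap.coe_sum, Finset.sum_apply, smul_eq_mul]
    rw [integral_const_mul, integral_finsetSum]
    · simp only [integral_const_mul, ContinuousMap.smul_apply, smul_eq_mul]
    · intro i _
      exact cont_integrable _ (w i • (i : C(Y, ℝ))).continuous
  refine ⟨ψ, c' - ∫ y, ψ y ∂(p0 : Measure Y), by linarith, fun q => ?_⟩
  by_cases hq : Φ q = ⊤
  · simp [hq]
  have hqb : Φ q ≠ ⊥ := fun h => by simpa [h] using hK q
  rw [← EReal.coe_toReal hq hqb]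
  have h1 := hkey q _ (EReal.le_coe_toReal hq)
  have h2 : ∫ y, ψ y ∂(q : Measure Y) - ∫ y, ψ y ∂(p0 : Measure Y) = W⁻¹ * ∑ i : u, w i * D q i := by
    rw [hψ, hψ, ← mul_sub, ← Finset.sum_sub_distrib]
    simp only [D, mul_sub]
  have h3 : c' + W⁻¹ * ∑ i : u, w i * D q i ≤ (Φ q).toReal := by
    rw [← mul_le_mul_iff_left₀ hW]
    calc (c' + W⁻¹ * ∑ i : u, w i * D q i) * W = c' * W + ∑ i : u, w i * D q i := by field_simp
      _ ≤ _ := h1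
  exact_mod_cast (by linarith : c' - ∫ y, ψ y ∂(p0 : Measure Y) + ∫ y, ψ y ∂(q : Measure Y)
    ≤ (Φ q).toReal)

end Cost

section Cost2

variable {X : Type*} [MetricSpace X] [CompactSpace X] [MeasurableSpace X] [BorelSpace X]
variable {Y : Type*} [MetricSpace Y] [CompactSpace Y] [MeasurableSpace Y] [BorelSpace Y]

lemma abs_integral_le (p : Measure Y) [IsProbabilityMeasure p] (ψ : C(Y, ℝ)) :
    |∫ y, ψ y ∂p| ≤ ‖ψ‖ := by
  have := norm_integral_le_of_norm_le_const (μ := p) (f := fun y => ψ y) (C := ‖ψ‖)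
    (Eventually.of_forall fun x => ψ.norm_coe_le_norm x)
  simpa using this

lemma integral_cont (p : Measure Y) [IsProbabilityMeasure p] :
    Continuous fun ψ : C(Y, ℝ) => ∫ y, ψ y ∂p := by
  refine (LipschitzWith.of_dist_le_mul (K := 1) fun ψ ψ' => ?_).continuous
  rw [Real.dist_eq, dist_eq_norm, ← integral_sub (cont_integrable p ψ.continuous)
    (cont_integrable p ψ'.continuous)]
  simpa using abs_integral_le p (ψ - ψ')

/-- affine minorants of the cost -/
def affMin (C : X → ProbabilityMeasure Y → EReal) : Set (C(Y, ℝ) × C(X, ℝ)) :=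
  {k | ∀ x (q : ProbabilityMeasure Y),
    ((∫ y, k.1 y ∂(q : Measure Y) + k.2 x : ℝ) : EReal) ≤ C x q}

lemma cost_local (C : X → ProbabilityMeasure Y → EReal)
    (hl : LowerSemicontinuous fun q : X × ProbabilityMeasure Y => C q.1 q.2)
    {K : ℝ} (hK : ∀ x p, (K : EReal) ≤ C x p) (hcv : ∀ x, PConv (C x))
    (x0 : X) (p0 : ProbabilityMeasure Y) {c : ℝ} (hc : (c : EReal) < C x0 p0) :
    ∃ k ∈ affMin C, c < ∫ y, k.1 y ∂(p0 : Measure Y) + k.2 x0 := by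
  have hlx : LowerSemicontinuous (C x0) := by
    have : Continuous fun q : ProbabilityMeasure Y => (x0, q) := by fun_prop
    have h0 := LowerSemicontinuous.comp hl this
    exact h0
  obtain ⟨ψ, b, h1, h2⟩ := costD (C x0) hlx (hK x0) (hcv x0) p0 hc
  obtain ⟨b', hb1, hb2⟩ := exists_between (sub_lt_iff_lt_add.2 h1)
  have hcont : Continuous fun z : X × ProbabilityMeasure Y => (z,
      ((b' + ∫ y, ψ y ∂(z.2 : Measure Y) : ℝ) : EReal)) := by
    have := (ProbabilityMeasure.continuous_integral_continuousMap (X := Y) ψ).comp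
      (continuous_snd (X := X))
    exact continuous_id.prodMk (continuous_coe_real_ereal.comp (continuous_const.add this))
  have hW : IsOpen {z : X × ProbabilityMeasure Y |
      ((b' + ∫ y, ψ y ∂(z.2 : Measure Y) : ℝ) : EReal) < C z.1 z.2} := by
    have := (hl.isClosed_epigraph.preimage hcont).isOpen_compl
    convert this using 1
    ext z
    simp
  obtain ⟨U, V, hU, -, hxU, hV, hUV⟩ := generalized_tube_lemma (isCompact_singleton (x := x0))
    (isCompact_univ (X := ProbabilityMeasure Y)) hW (by
      rintro ⟨x, q⟩ ⟨hx, -⟩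
      obtain rfl : x = x0 := hx
      refine lt_of_lt_of_le ?_ (h2 q)
      exact_mod_cast (by linarith : b' + ∫ y, ψ y ∂(q : Measure Y) < b + ∫ y, ψ y ∂(q : Measure Y)))
  obtain ⟨δ, hδ, hball⟩ := Metric.isOpen_iff.1 hU x0 (hxU rfl)
  let M : ℝ := max (b' - K + ‖ψ‖) 0
  refine ⟨⟨ψ, ⟨fun x => b' - M * min 1 (dist x x0 / δ), by fun_prop⟩⟩, ?_, ?_⟩
  · intro x q
    have hM0 : 0 ≤ M := le_max_right _ _
    have hM1 : b' - K + ‖ψ‖ ≤ M := le_max_left _ _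
    have hmin : 0 ≤ min 1 (dist x x0 / δ) := le_min zero_le_one (by positivity)
    by_cases hx : x ∈ U
    · have h3 : ((b' + ∫ y, ψ y ∂(q : Measure Y) : ℝ) : EReal) < C x q :=
        hUV (show (x, q) ∈ U ×ˢ V from ⟨hx, hV trivial⟩)
      refine le_trans ?_ h3.le
      have := mul_nonneg hM0 hmin
      exact_mod_cast (by simp only [ContinuousMap.coe_mk]; linarith)
    · have hd : 1 ≤ dist x x0 / δ := by
        rw [le_div_iff₀ hδ, one_mul]
        by_contra hlt
        exact hx (hball (not_le.1 hlt))
      refine le_trans ?_ (hK x q)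
      have h4 := (abs_le.1 (abs_integral_le (q : Measure Y) ψ)).2
      have h5 : ∫ y, ψ y ∂(q : Measure Y) + (b' - M * min 1 (dist x x0 / δ)) ≤ K := by
        rw [min_eq_left hd]; linarith
      exact_mod_cast h5
  · simp only [ContinuousMap.coe_mk, dist_self, zero_div]
    norm_num
    linarith

lemma cost_seq (C : X → ProbabilityMeasure Y → EReal)
    (hl : LowerSemicontinuous fun q : X × ProbabilityMeasure Y => C q.1 q.2)
    {K : ℝ} (hK : ∀ x p, (K : EReal) ≤ C x p) (hcv : ∀ x, PConv (C x)) :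
    ∃ k : ℕ → C(Y, ℝ) × C(X, ℝ), (∀ n, k n ∈ affMin C) ∧
      ∀ x (p : ProbabilityMeasure Y),
        (⨆ n, ((∫ y, (k n).1 y ∂(p : Measure Y) + (k n).2 x : ℝ) : EReal)) = C x p := by
  have hne : Nonempty (affMin C) := ⟨⟨(0, ContinuousMap.const X K), fun x q => by
    simpa using hK x q⟩⟩
  refine ⟨fun n => (TopologicalSpace.denseSeq (affMin C) n : C(Y, ℝ) × C(X, ℝ)),
    fun n => (TopologicalSpace.denseSeq (affMin C) n).2, fun x p => le_antisymm ?_ ?_⟩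
  · exact iSup_le fun n => (TopologicalSpace.denseSeq (affMin C) n).2 x p
  · refine le_of_forall_lt fun c0 hc0 => ?_
    obtain ⟨c, hc1, hc⟩ := EReal.lt_iff_exists_real_btwn.1 hc0
    refine lt_of_lt_of_le hc1 ?_
    obtain ⟨k, hk, hck⟩ := cost_local C hl hK hcv x p hc
    have hop : IsOpen {k : affMin C | c < ∫ y, k.1.1 y ∂(p : Measure Y) + k.1.2 x} := by
      apply isOpen_lt continuous_const
      have h1 := (integral_cont (p : Measure Y)).comp
        (continuous_fst.comp (continuous_subtype_val (p := fun k => k ∈ affMin C)))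
      have h2 := (continuous_eval_const (F := C(X, ℝ)) x).comp
        (continuous_snd.comp (continuous_subtype_val (p := fun k => k ∈ affMin C)))
      exact h1.add h2
    obtain ⟨n, hn⟩ := (TopologicalSpace.denseRange_denseSeq (affMin C)).exists_mem_open hop
      ⟨⟨k, hk⟩, hck⟩
    refine le_iSup_of_le n ?_
    exact_mod_cast (le_of_lt hn)

/-- continuous functions below the cost -/
def Kset (C : X → ProbabilityMeasure Y → EReal) : Set C(X × Y, ℝ) :=
  {f | ∀ x (p : ProbabilityMeasure Y), ((∫ y, f (x, y) ∂(p : Measure Y) : ℝ) : EReal) ≤ C x p}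

lemma slice_int (p : Measure Y) [IsFiniteMeasure p] (f : C(X × Y, ℝ)) (x : X) :
    Integrable (fun y => f (x, y)) p :=
  cont_integrable p (f.continuous.comp (by fun_prop))

lemma mix_le {a b t : ℝ} {z : EReal} (ha : (a : EReal) ≤ z) (hb : (b : EReal) ≤ z) (h0 : 0 ≤ t)
    (h1 : t ≤ 1) : ((t * a + (1 - t) * b : ℝ) : EReal) ≤ z := by
  rcases le_total a b with h | h
  · exact le_trans (by exact_mod_cast (by nlinarith)) hb
  · exact le_trans (by exact_mod_cast (by nlinarith)) ha

lemma Kset_mix {C : X → ProbabilityMeasure Y → EReal} {f g : C(X × Y, ℝ)} (hf : f ∈ Kset C)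
    (hg : g ∈ Kset C) (θ : C(X, ℝ)) (hθ : ∀ x, 0 ≤ θ x ∧ θ x ≤ 1) (h : C(X × Y, ℝ))
    (hh : ∀ x y, h (x, y) = θ x * f (x, y) + (1 - θ x) * g (x, y)) :
    h ∈ Kset C ∧ ∀ (p : Measure Y) [IsFiniteMeasure p] x, ∫ y, h (x, y) ∂p
      = θ x * ∫ y, f (x, y) ∂p + (1 - θ x) * ∫ y, g (x, y) ∂p := by
  have e : ∀ (p : Measure Y) [IsFiniteMeasure p] x, ∫ y, h (x, y) ∂p
      = θ x * ∫ y, f (x, y) ∂p + (1 - θ x) * ∫ y, g (x, y) ∂p := by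
    intro p _ x
    simp only [hh]
    rw [integral_add ((slice_int p f x).const_mul _) ((slice_int p g x).const_mul _),
      integral_const_mul, integral_const_mul]
  refine ⟨fun x p => ?_, e⟩
  rw [e]
  exact mix_le (hf x p) (hg x p) (hθ x).1 (hθ x).2

variable [PolishSpace Y] [Nonempty Y]

lemma cost_weak (C : X → ProbabilityMeasure Y → EReal) (γ : Measure (X × Y)) [IsFiniteMeasure γ]
    {f : C(X × Y, ℝ)} (hf : f ∈ Kset C) :
    ((∫ z, f z ∂γ : ℝ) : EReal) ≤
      eIntegral γ.fst (fun x => C x ⟨γ.condKernel x, inferInstance⟩) := by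
  have hfi : Integrable f γ := cont_integrable γ f.continuous
  rw [← Measure.integral_condKernel hfi, ← eIntegral_coe hfi.integral_condKernel]
  exact eIntegral_mono fun x => hf x ⟨γ.condKernel x, inferInstance⟩

lemma cost_strong (C : X → ProbabilityMeasure Y → EReal)
    (hl : LowerSemicontinuous fun q : X × ProbabilityMeasure Y => C q.1 q.2)
    {K : ℝ} (hK : ∀ x p, (K : EReal) ≤ C x p) (hcv : ∀ x, PConv (C x))
    (γ : Measure (X × Y)) [IsFiniteMeasure γ] {c : ℝ}
    (hc : (c : EReal) < eIntegral γ.fst (fun x => C x ⟨γ.condKernel x, inferInstance⟩)) :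
    ∃ f ∈ Kset C, c < ∫ z, f z ∂γ := by
  obtain ⟨k, hk, hsup⟩ := cost_seq C hl hK hcv
  let G : Set (X → ℝ) := {g | ∃ f ∈ Kset C, g = fun x => ∫ y, f (x, y) ∂(γ.condKernel x)}
  have hG : ∀ g ∈ G, ∀ g' ∈ G, ∀ θ : C(X, ℝ), (∀ x, 0 ≤ θ x ∧ θ x ≤ 1) →
      (fun x => θ x * g x + (1 - θ x) * g' x) ∈ G := by
    rintro g ⟨f, hf, rfl⟩ g' ⟨f', hf', rfl⟩ θ hθ
    obtain ⟨h1, h2⟩ := Kset_mix hf hf' θ hθ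
      ⟨fun z => θ z.1 * f z + (1 - θ z.1) * f' z, by fun_prop⟩ (fun x y => rfl)
    exact ⟨_, h1, funext fun x => (h2 (γ.condKernel x) x).symm⟩
  let f : ℕ → C(X × Y, ℝ) := fun n => ⟨fun z => (k n).1 z.2 + (k n).2 z.1, by fun_prop⟩
  have hfe : ∀ n x (p : Measure Y) [IsProbabilityMeasure p],
      ∫ y, f n (x, y) ∂p = ∫ y, (k n).1 y ∂p + (k n).2 x := by
    intro n x p _
    simp only [f, ContinuousMap.coe_mk]
    rw [integral_add (cont_integrable p (k n).1.continuous) (integrable_const _)]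
    simp
  have hfK : ∀ n, f n ∈ Kset C := by
    intro n x p
    rw [hfe]
    exact hk n x p
  have hsup' : ∀ x, C x ⟨γ.condKernel x, inferInstance⟩
      = ⨆ n, ((∫ y, f n (x, y) ∂(γ.condKernel x) : ℝ) : EReal) := by
    intro x
    refine (hsup x ⟨γ.condKernel x, inferInstance⟩).symm.trans ?_
    simp only [hfe]
    rfl
  simp only [hsup'] at hc
  have hGm : ∀ g ∈ G, Measurable g := by
    rintro g ⟨f, hf, rfl⟩
    exact (f.continuous.measurable.stronglyMeasurable.integral_kernel_prod_right'
      (κ := γ.condKernel)).measurable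
  have hGi : ∀ g ∈ G, Integrable g γ.fst := by
    rintro g ⟨f, hf, rfl⟩
    exact (cont_integrable γ f.continuous).integral_condKernel
  obtain ⟨g, ⟨f0, hf0, rfl⟩, hg⟩ := sel_main γ.fst G hGm hGi hG
    (fun n x => ∫ y, f n (x, y) ∂(γ.condKernel x)) (fun n => ⟨f n, hfK n, rfl⟩) hc
  exact ⟨f0, hf0, by
      rwa [Measure.integral_condKernel (cont_integrable γ f0.continuous)] at hg⟩

end Cost2

section HB

lemma riesz {Z : Type*} [MetricSpace Z] [CompactSpace Z] [MeasurableSpace Z] [BorelSpace Z]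
    (L : C(Z, ℝ) →ₗ[ℝ] ℝ) (hpos : ∀ f : C(Z, ℝ), (∀ z, 0 ≤ f z) → 0 ≤ L f) :
    ∃ γ : Measure Z, IsFiniteMeasure γ ∧ ∀ f : C(Z, ℝ), ∫ z, f z ∂γ = L f := by
  let L0 : CompactlySupportedContinuousMap Z ℝ →ₗ[ℝ] ℝ :=
    { toFun := fun f => L f.toContinuousMap
      map_add' := fun f g => by rw [← map_add]; rfl
      map_smul' := fun a f => by rw [← map_smul]; rfl }
  let L1 : CompactlySupportedContinuousMap Z ℝ →ₚ[ℝ] ℝ :=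
    PositiveLinearMap.mk₀ L0 (fun f hf => hpos _ fun z => hf z)
  refine ⟨RealRMK.rieszMeasure L1, inferInstance, fun f => ?_⟩
  exact RealRMK.integral_rieszMeasure L1 (CompactlySupportedContinuousMap.continuousMapEquiv f)

variable {X : Type*} [MetricSpace X] [CompactSpace X] [MeasurableSpace X] [BorelSpace X]
variable {Y : Type*} [MetricSpace Y] [CompactSpace Y] [MeasurableSpace Y] [BorelSpace Y]

/-- dual objective -/
def dualJ {X Y : Type*} [TopologicalSpace X] [TopologicalSpace Y] [MeasurableSpace X]
    [MeasurableSpace Y] (F₁ F₂ : EntropyFn) (μ₁ : Measure X) (μ₂ : Measure Y)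
    (φ₁ : C(X, ℝ)) (φ₂ : C(Y, ℝ)) : ℝ :=
  ∫ x, F₁.circR (φ₁ x) ∂μ₁ + ∫ y, F₂.circR (φ₂ y) ∂μ₂

lemma circR_int_mix (F : EntropyFn) (μ : Measure X) [IsFiniteMeasure μ] {φ φ' : C(X, ℝ)}
    (h : ∀ x, φ x ∈ F.O) (h' : ∀ x, φ' x ∈ F.O) {t : ℝ} (h0 : 0 ≤ t) (h1 : t ≤ 1) :
    (∀ x, (t • φ + (1 - t) • φ') x ∈ F.O) ∧
    t * ∫ x, F.circR (φ x) ∂μ + (1 - t) * ∫ x, F.circR (φ' x) ∂μ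
      ≤ ∫ x, F.circR ((t • φ + (1 - t) • φ') x) ∂μ := by
  have hO : ∀ x, (t • φ + (1 - t) • φ') x ∈ F.O := fun x =>
    F.O_convex (h x) (h' x) h0 (by linarith) (by ring)
  refine ⟨hO, ?_⟩
  have i1 := (cont_integrable μ (circR_comp_cont F φ h)).const_mul t
  have i2 := (cont_integrable μ (circR_comp_cont F φ' h')).const_mul (1 - t)
  rw [← integral_const_mul, ← integral_const_mul, ← integral_add i1 i2]
  apply integral_mono (i1.add i2) (cont_integrable μ (circR_comp_cont F _ hO))
  intro x
  exact F.circR_concave (F.O_sub (h x)) (F.O_sub (h' x)) h0 h1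

lemma dual_measure (C : X → ProbabilityMeasure Y → EReal) (F₁ F₂ : EntropyFn)
    (μ₁ : Measure X) (μ₂ : Measure Y) [IsFiniteMeasure μ₁] [IsFiniteMeasure μ₂] (c : ℝ)
    (hc : ∀ (φ₁ : C(X, ℝ)) (φ₂ : C(Y, ℝ)), (∀ x, φ₁ x ∈ F₁.O) → (∀ y, φ₂ y ∈ F₂.O) →
      (∀ x (p : ProbabilityMeasure Y),
        ((φ₁ x + ∫ y, φ₂ y ∂(p : Measure Y) : ℝ) : EReal) ≤ C x p) → dualJ F₁ F₂ μ₁ μ₂ φ₁ φ₂ ≤ c)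
    (q₁ q₂ k : ℝ) (hq₁ : q₁ ∈ F₁.O) (hq₂ : q₂ ∈ F₂.O) (hq : q₁ + q₂ < k)
    (hk : ∀ x p, (k : EReal) ≤ C x p) :
    ∃ γ : Measure (X × Y), IsFiniteMeasure γ ∧ ∀ (φ₁ : C(X, ℝ)) (φ₂ : C(Y, ℝ)),
      (∀ x, φ₁ x ∈ F₁.O) → (∀ y, φ₂ y ∈ F₂.O) → ∀ f ∈ Kset C,
      ∫ z, f z ∂γ - ∫ x, φ₁ x ∂γ.fst - ∫ y, φ₂ y ∂γ.snd + dualJ F₁ F₂ μ₁ μ₂ φ₁ φ₂ ≤ c := by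
  let S : Set (C(X × Y, ℝ) × ℝ) := {z | ∃ (φ₁ : C(X, ℝ)) (φ₂ : C(Y, ℝ)) (f : C(X × Y, ℝ)),
    (∀ x, φ₁ x ∈ F₁.O) ∧ (∀ y, φ₂ y ∈ F₂.O) ∧ f ∈ Kset C ∧
    (∀ w : X × Y, z.1 w < f w - φ₁ w.1 - φ₂ w.2) ∧ z.2 < dualJ F₁ F₂ μ₁ μ₂ φ₁ φ₂}
  have hSo : IsOpen S := by
    have e : S = ⋃ (φ₁ : C(X, ℝ)) (φ₂ : C(Y, ℝ)) (f : C(X × Y, ℝ))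
        (_ : (∀ x, φ₁ x ∈ F₁.O) ∧ (∀ y, φ₂ y ∈ F₂.O) ∧ f ∈ Kset C),
        {z : C(X × Y, ℝ) × ℝ | (∀ w : X × Y, z.1 w < f w - φ₁ w.1 - φ₂ w.2) ∧
          z.2 < dualJ F₁ F₂ μ₁ μ₂ φ₁ φ₂} := by
      ext z
      simp only [S, mem_setOf_eq, mem_iUnion, exists_prop, and_assoc]
    rw [e]
    refine isOpen_iUnion fun φ₁ => isOpen_iUnion fun φ₂ => isOpen_iUnion fun f =>
      isOpen_iUnion fun _ => ?_
    refine IsOpen.inter ?_ (isOpen_lt continuous_snd continuous_const)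
    let g : C(X × Y, ℝ) := ⟨fun w => f w - φ₁ w.1 - φ₂ w.2, by fun_prop⟩
    have h1 : IsOpen {h : C(X × Y, ℝ) | MapsTo h univ (Iio (0:ℝ))} :=
      ContinuousMap.isOpen_setOf_mapsTo isCompact_univ isOpen_Iio
    have h2 : Continuous fun z : C(X × Y, ℝ) × ℝ => z.1 - g := continuous_fst.sub continuous_const
    have e2 : {z : C(X × Y, ℝ) × ℝ | ∀ w : X × Y, z.1 w < f w - φ₁ w.1 - φ₂ w.2} =
        (fun z : C(X × Y, ℝ) × ℝ => z.1 - g) ⁻¹' {h : C(X × Y, ℝ) | MapsTo h univ (Iio (0:ℝ))} := by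
      ext z
      constructor
      · intro h w _
        exact sub_neg.2 (h w)
      · intro h w
        exact sub_neg.1 (h (mem_univ w))
    have h3 := h1.preimage h2
    rw [← e2] at h3
    exact h3
  have hSc : Convex ℝ S := by
    rintro ⟨h, r⟩ ⟨φ₁, φ₂, f, a1, a2, a3, a4, a5⟩ ⟨h', r'⟩ ⟨φ₁', φ₂', f', b1, b2, b3, b4, b5⟩ t s ht hs hts
    obtain rfl : s = 1 - t := by linarith
    have ht1 : t ≤ 1 := by linarith
    obtain ⟨c1, c2⟩ := circR_int_mix F₁ μ₁ a1 b1 ht ht1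
    obtain ⟨d1, d2⟩ := circR_int_mix F₂ μ₂ a2 b2 ht ht1
    have hlt : ∀ a b a' b' : ℝ, a < b → a' < b' → t * a + (1 - t) * a' < t * b + (1 - t) * b' := by
      intro a b a' b' h1 h2
      rcases eq_or_lt_of_le ht with h0 | h0
      · subst h0; linarith
      · nlinarith [mul_lt_mul_of_pos_left h1 h0, mul_le_mul_of_nonneg_left h2.le hs]
    refine ⟨_, _, t • f + (1 - t) • f', c1, d1, ?_, fun w => ?_, ?_⟩
    · exact (Kset_mix a3 b3 (ContinuousMap.const X t) (fun _ => ⟨ht, ht1⟩)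
        (t • f + (1 - t) • f') (fun x y => rfl)).1
    · have := hlt _ _ _ _ (a4 w) (b4 w)
      simp only [Prod.smul_mk, Prod.mk_add_mk, ContinuousMap.add_apply, ContinuousMap.smul_apply,
        smul_eq_mul] at this ⊢
      linarith
    · have := hlt _ _ _ _ a5 b5
      unfold dualJ at this ⊢
      simp only [Prod.smul_mk, Prod.mk_add_mk, smul_eq_mul] at this ⊢
      linarith
  have hnot : ((0 : C(X × Y, ℝ)), c) ∉ S := by
    rintro ⟨φ₁, φ₂, f, a1, a2, a3, a4, a5⟩
    refine absurd (hc φ₁ φ₂ a1 a2 fun x p => ?_) (not_le.2 a5)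
    refine le_trans ?_ (a3 x p)
    have h1 : φ₁ x + ∫ y, φ₂ y ∂(p : Measure Y) ≤ ∫ y, f (x, y) ∂(p : Measure Y) := by
      have e : ∫ y, (φ₁ x + φ₂ y) ∂(p : Measure Y) = φ₁ x + ∫ y, φ₂ y ∂(p : Measure Y) := by
        rw [integral_add (integrable_const _) (cont_integrable _ φ₂.continuous)]
        simp
      rw [← e]
      apply integral_mono ((integrable_const _).add (cont_integrable _ φ₂.continuous))
        (slice_int _ f x)
      intro y
      have := a4 (x, y)
      simp only [ContinuousMap.zero_apply, Pi.add_apply] at this ⊢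
      linarith
    exact_mod_cast h1
  obtain ⟨l, hl⟩ := geometric_hahn_banach_open_point hSc hSo hnot
  set α : ℝ := l (0, 1) with hα
  let L : C(X × Y, ℝ) →ₗ[ℝ] ℝ := l.toLinearMap.comp (LinearMap.inl ℝ C(X × Y, ℝ) ℝ)
  have hsplit : ∀ h r, l (h, r) = L h + r * α := by
    intro h r
    have e : ((h, r) : C(X × Y, ℝ) × ℝ) = (h, 0) + r • ((0 : C(X × Y, ℝ)), (1:ℝ)) := by simp
    rw [e, map_add, map_smul]
    rfl
  have hl' : ∀ h r, (h, r) ∈ S → L h + r * α < c * α := by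
    intro h r hS
    have := hl _ hS
    rw [hsplit, hsplit] at this
    simpa using this
  set j0 := dualJ F₁ F₂ μ₁ μ₂ (ContinuousMap.const X q₁) (ContinuousMap.const Y q₂) with hj0
  have hkK : ContinuousMap.const (X × Y) k ∈ Kset C := fun x p => by simpa using hk x p
  have hbase : ∀ h : C(X × Y, ℝ), (∀ w, h w ≤ 0) → (h, j0 - 1) ∈ S := by
    intro h hh
    refine ⟨ContinuousMap.const X q₁, ContinuousMap.const Y q₂, _, fun _ => hq₁, fun _ => hq₂, hkK,
      fun w => ?_, ?_⟩
    · have := hh w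
      simp only [ContinuousMap.const_apply]
      linarith
    · show j0 - 1 < j0
      linarith
  have hj0c : j0 ≤ c := hc _ _ (fun _ => hq₁) (fun _ => hq₂) fun x p => by
    refine le_trans ?_ (hk x p)
    simp only [ContinuousMap.const_apply, integral_const, probReal_univ, one_smul]
    exact_mod_cast hq.le
  have hαpos : 0 < α := by
    have := hl' 0 _ (hbase 0 fun w => le_rfl)
    rw [map_zero] at this
    by_contra hneg
    nlinarith
  have hLpos : ∀ f : C(X × Y, ℝ), (∀ z, 0 ≤ f z) → 0 ≤ L f := by
    intro f hf
    by_contra hneg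
    push Not at hneg
    have h1 : ∀ t : ℝ, 0 ≤ t → -t * L f + (j0 - 1) * α < c * α := by
      intro t ht
      have := hl' ((-t) • f) _ (hbase _ fun w => by
        simp only [ContinuousMap.smul_apply, smul_eq_mul]
        nlinarith [hf w])
      rwa [map_smul, smul_eq_mul] at this
    have h2 := h1 ((c - (j0 - 1)) * α / (-(L f))) (div_nonneg
      (mul_nonneg (by linarith) hαpos.le) (by linarith))
    have h3 : -((c - (j0 - 1)) * α / (-(L f))) * L f = (c - (j0 - 1)) * α := by
      have hne : L f ≠ 0 := by intro h0; linarith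
      field_simp
    rw [h3] at h2
    linarith
  obtain ⟨γ, hγ, hγL⟩ := riesz (α⁻¹ • L) fun f hf =>
    mul_nonneg (inv_nonneg.2 hαpos.le) (hLpos f hf)
  refine ⟨γ, hγ, fun φ₁ φ₂ h1 h2 f hf => ?_⟩
  let g : C(X × Y, ℝ) := ⟨fun w => f w - φ₁ w.1 - φ₂ w.2, by fun_prop⟩
  have hgL : L g + dualJ F₁ F₂ μ₁ μ₂ φ₁ φ₂ * α ≤ c * α := by
    have hε : ∀ ε : ℝ, 0 < ε →
        L g + dualJ F₁ F₂ μ₁ μ₂ φ₁ φ₂ * α < c * α + ε * (L 1 + α) := by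
      intro ε hε
      have := hl' (g - ε • 1) (dualJ F₁ F₂ μ₁ μ₂ φ₁ φ₂ - ε) ⟨φ₁, φ₂, f, h1, h2, hf, fun w => by
        simp [g, hε], by simpa using hε⟩
      rw [map_sub, map_smul, smul_eq_mul] at this
      linarith
    have hL1 : 0 ≤ L 1 := hLpos 1 fun z => zero_le_one
    have hp : 0 < L 1 + α := by linarith
    apply le_of_forall_pos_lt_add
    intro ε h0
    have := hε (ε / (L 1 + α)) (div_pos h0 hp)
    rwa [div_mul_cancel₀ _ hp.ne'] at this
  have hgi : ∫ z, g z ∂γ = ∫ z, f z ∂γ - ∫ x, φ₁ x ∂γ.fst - ∫ y, φ₂ y ∂γ.snd := by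
    have e1 : ∫ x, φ₁ x ∂γ.fst = ∫ z, φ₁ z.1 ∂γ :=
      integral_map measurable_fst.aemeasurable φ₁.continuous.aestronglyMeasurable
    have e2 : ∫ y, φ₂ y ∂γ.snd = ∫ z, φ₂ z.2 ∂γ :=
      integral_map measurable_snd.aemeasurable φ₂.continuous.aestronglyMeasurable
    rw [e1, e2]
    have i0 := cont_integrable γ f.continuous
    have i1 : Integrable (fun z : X × Y => φ₁ z.1) γ := cont_integrable γ (by fun_prop)
    have i2 : Integrable (fun z : X × Y => φ₂ z.2) γ := cont_integrable γ (by fun_prop)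
    have s1 := integral_sub i0 i1
    have s2 := integral_sub (i0.sub i1) i2
    refine Eq.trans s2 ?_
    rw [← s1]
    rfl
  rw [← hgi, hγL]
  show α⁻¹ * L g + _ ≤ c
  rw [← mul_le_mul_iff_left₀ hαpos]
  calc (α⁻¹ * L g + dualJ F₁ F₂ μ₁ μ₂ φ₁ φ₂) * α = L g + dualJ F₁ F₂ μ₁ μ₂ φ₁ φ₂ * α := by
        field_simp
    _ ≤ _ := hgL

end HB

lemma ereal_add3_le {A B D : EReal} {c : ℝ}
    (h : ∀ a b d : ℝ, (a : EReal) < A → (b : EReal) < B → (d : EReal) < D → a + b + d ≤ c) :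
    A + B + D ≤ c := by
  apply EReal.add_le_of_forall_lt
  intro s hs t ht
  obtain ⟨d, htd, hd⟩ := EReal.lt_iff_exists_real_btwn.1 ht
  have hAB : A + B ≤ ((c - d : ℝ) : EReal) := by
    apply EReal.add_le_of_forall_lt
    intro a ha b hb
    obtain ⟨a', h1, h2⟩ := EReal.lt_iff_exists_real_btwn.1 ha
    obtain ⟨b', h3, h4⟩ := EReal.lt_iff_exists_real_btwn.1 hb
    refine (add_le_add h1.le h3.le).trans ?_
    have := h a' b' d h2 h4 hd
    exact_mod_cast (by linarith : a' + b' ≤ c - d)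
  refine (add_le_add (hs.le.trans hAB) htd.le).trans ?_
  rw [← EReal.coe_add]
  simp

lemma eIntegral_circ {X : Type*} [MetricSpace X] [CompactSpace X] [MeasurableSpace X]
    [BorelSpace X] (F : EntropyFn) (μ : Measure X) [IsFiniteMeasure μ] (φ : C(X, ℝ))
    (hφ : ∀ x, φ x ∈ F.O) :
    eIntegral μ (fun x => F.circ (φ x)) = ((∫ x, F.circR (φ x) ∂μ : ℝ) : EReal) := by
  rw [← eIntegral_coe (cont_integrable μ (circR_comp_cont F φ hφ))]
  congr 1
  ext x
  rw [F.coe_circR (F.O_sub (hφ x))]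

theorem stmt1
    {X₁ : Type*} [MetricSpace X₁] [CompactSpace X₁] [MeasurableSpace X₁] [BorelSpace X₁]
    {X₂ : Type*} [MetricSpace X₂] [CompactSpace X₂] [PolishSpace X₂] [MeasurableSpace X₂]
    [BorelSpace X₂] [Nonempty X₂]
    (C : X₁ → ProbabilityMeasure X₂ → EReal)
    (hClsc : LowerSemicontinuous fun q : X₁ × ProbabilityMeasure X₂ => C q.1 q.2)
    (hCbdd : ∃ K : ℝ, ∀ x p, (K : EReal) ≤ C x p)
    (hCconv : ∀ (x : X₁) (p q m : ProbabilityMeasure X₂) (t : ℝ), 0 ≤ t → t ≤ 1 →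
      (m : Measure X₂) = ENNReal.ofReal t • (p : Measure X₂)
          + ENNReal.ofReal (1 - t) • (q : Measure X₂) →
      C x m ≤ (t : EReal) * C x p + ((1 - t : ℝ) : EReal) * C x q)
    (F₁ F₂ : EntropyFn)
    (hcoer : (0 : EReal) < ((F₁.recC : ℝ≥0∞) : EReal) + ((F₂.recC : ℝ≥0∞) : EReal)
        + sInf { e : EReal | ∃ (x : X₁) (p : ProbabilityMeasure X₂), e = C x p })
    (μ₁ : Measure X₁) (μ₂ : Measure X₂) [IsFiniteMeasure μ₁] [IsFiniteMeasure μ₂]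
    (hfeas : ∃ (γ : Measure (X₁ × X₂)) (hγ : IsFiniteMeasure γ),
      wCost C F₁ F₂ μ₁ μ₂ γ hγ < ⊤) :
    wOpt C F₁ F₂ μ₁ μ₂
      = sSup { e : EReal | ∃ φ ∈ lamSet C F₁ F₂,
          e = eIntegral μ₁ (fun x => F₁.circ (φ.1 x)) +
              eIntegral μ₂ (fun x => F₂.circ (φ.2 x)) } := by
  obtain ⟨K, hK⟩ := hCbdd
  have hsum : ∀ (γ : Measure (X₁ × X₂)) [IsFiniteMeasure γ] (φ₁ : C(X₁, ℝ)) (φ₂ : C(X₂, ℝ)),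
      ∫ z, (φ₁ z.1 + φ₂ z.2) ∂γ = ∫ x, φ₁ x ∂γ.fst + ∫ y, φ₂ y ∂γ.snd := by
    intro γ _ φ₁ φ₂
    have e1 : ∫ x, φ₁ x ∂γ.fst = ∫ z, φ₁ z.1 ∂γ :=
      integral_map measurable_fst.aemeasurable φ₁.continuous.aestronglyMeasurable
    have e2 : ∫ y, φ₂ y ∂γ.snd = ∫ z, φ₂ z.2 ∂γ :=
      integral_map measurable_snd.aemeasurable φ₂.continuous.aestronglyMeasurable
    rw [e1, e2]
    exact integral_add (cont_integrable γ (by fun_prop)) (cont_integrable γ (by fun_prop))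
  have hweak : ∀ (φ₁ : C(X₁, ℝ)) (φ₂ : C(X₂, ℝ)), (∀ x, φ₁ x ∈ F₁.O) → (∀ y, φ₂ y ∈ F₂.O) →
      (∀ x (p : ProbabilityMeasure X₂),
        ((φ₁ x + ∫ y, φ₂ y ∂(p : Measure X₂) : ℝ) : EReal) ≤ C x p) →
      ∀ (γ : Measure (X₁ × X₂)) (hγ : IsFiniteMeasure γ),
      ((dualJ F₁ F₂ μ₁ μ₂ φ₁ φ₂ : ℝ) : EReal) ≤ wCost C F₁ F₂ μ₁ μ₂ γ hγ := by
    intro φ₁ φ₂ h1 h2 h3 γ hγ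
    let f : C(X₁ × X₂, ℝ) := ⟨fun w => φ₁ w.1 + φ₂ w.2, by fun_prop⟩
    have hf : f ∈ Kset C := by
      intro x p
      have : ∫ y, f (x, y) ∂(p : Measure X₂) = φ₁ x + ∫ y, φ₂ y ∂(p : Measure X₂) := by
        have := integral_add (μ := (p : Measure X₂)) (integrable_const (φ₁ x))
          (cont_integrable (p : Measure X₂) φ₂.continuous)
        refine Eq.trans this ?_
        simp
      rw [this]
      exact h3 x p
    have hfi : ∫ z, f z ∂γ = ∫ x, φ₁ x ∂γ.fst + ∫ y, φ₂ y ∂γ.snd := hsum γ φ₁ φ₂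
    have w := add_le_add (add_le_add (ent_weak F₁ γ.fst μ₁ φ₁ h1) (ent_weak F₂ γ.snd μ₂ φ₂ h2))
      (cost_weak C γ hf)
    refine le_trans (le_of_eq ?_) w
    rw [← EReal.coe_add, ← EReal.coe_add, hfi, dualJ]
    congr 1
    ring
  obtain ⟨r₁, r₂, k, hr₁, hr₂, hk, hpos⟩ : ∃ r₁ r₂ k : ℝ,
      (r₁ : EReal) < ((F₁.recC : ℝ≥0∞) : EReal) ∧ (r₂ : EReal) < ((F₂.recC : ℝ≥0∞) : EReal) ∧
      (k : EReal) < sInf { e : EReal | ∃ (x : X₁) (p : ProbabilityMeasure X₂), e = C x p } ∧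
      0 < r₁ + r₂ + k := by
    by_contra hcon
    push Not at hcon
    refine absurd hcoer (not_lt.2 ?_)
    exact ereal_add3_le (c := 0) fun a b d ha hb hd => hcon a b d ha hb hd
  have hkC : ∀ x p, (k : EReal) ≤ C x p := fun x p => hk.le.trans (sInf_le ⟨x, p, rfl⟩)
  have hq₁ : -r₁ ∈ F₁.O := F₁.mem_O_of_recC (by rwa [neg_neg])
  have hq₂ : -r₂ ∈ F₂.O := F₂.mem_O_of_recC (by rwa [neg_neg])
  set D := sSup { e : EReal | ∃ φ ∈ lamSet C F₁ F₂,
          e = eIntegral μ₁ (fun x => F₁.circ (φ.1 x)) +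
              eIntegral μ₂ (fun x => F₂.circ (φ.2 x)) } with hD
  have hle : D ≤ wOpt C F₁ F₂ μ₁ μ₂ := by
    refine sSup_le ?_
    rintro e ⟨φ, ⟨a, b, d⟩, rfl⟩
    refine le_sInf ?_
    rintro e ⟨γ, hγ, rfl⟩
    refine le_trans (le_of_eq ?_)
      (hweak φ.1.toContinuousMap φ.2.toContinuousMap a b d γ hγ)
    rw [dualJ, EReal.coe_add, ← eIntegral_circ F₁ μ₁ _ a, ← eIntegral_circ F₂ μ₂ _ b]
    rfl
  have hge : ∀ (φ₁ : C(X₁, ℝ)) (φ₂ : C(X₂, ℝ)), (∀ x, φ₁ x ∈ F₁.O) → (∀ y, φ₂ y ∈ F₂.O) →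
      (∀ x (p : ProbabilityMeasure X₂),
        ((φ₁ x + ∫ y, φ₂ y ∂(p : Measure X₂) : ℝ) : EReal) ≤ C x p) →
      ((dualJ F₁ F₂ μ₁ μ₂ φ₁ φ₂ : ℝ) : EReal) ≤ D := by
    intro φ₁ φ₂ a b d
    refine le_sSup ⟨(BoundedContinuousFunction.mkOfCompact φ₁,
      BoundedContinuousFunction.mkOfCompact φ₂), ⟨a, b, d⟩, ?_⟩
    rw [dualJ, EReal.coe_add, ← eIntegral_circ F₁ μ₁ _ a, ← eIntegral_circ F₂ μ₂ _ b]
    rfl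
  have htop : D ≠ ⊤ := by
    obtain ⟨γ, hγ, hlt⟩ := hfeas
    exact (lt_of_le_of_lt (hle.trans (sInf_le ⟨γ, hγ, rfl⟩)) hlt).ne
  have hbot : D ≠ ⊥ := by
    have := hge (ContinuousMap.const _ (-r₁)) (ContinuousMap.const _ (-r₂))
      (fun _ => hq₁) (fun _ => hq₂) (fun x p => by
        refine le_trans ?_ (hkC x p)
        have : (ContinuousMap.const X₁ (-r₁)) x +
            ∫ y, (ContinuousMap.const X₂ (-r₂)) y ∂(p : Measure X₂) ≤ k := by
          simp
          linarith
        exact_mod_cast this)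
    exact (lt_of_lt_of_le (EReal.bot_lt_coe _) this).ne'
  lift D to ℝ using ⟨htop, hbot⟩ with c
  obtain ⟨γ, hγ, hmain⟩ := dual_measure C F₁ F₂ μ₁ μ₂ c
    (fun φ₁ φ₂ a b d => by exact_mod_cast hge φ₁ φ₂ a b d) (-r₁) (-r₂) k hq₁ hq₂ (by linarith) hkC
  refine le_antisymm ?_ hle
  refine (sInf_le ⟨γ, hγ, rfl⟩ : wOpt C F₁ F₂ μ₁ μ₂ ≤ wCost C F₁ F₂ μ₁ μ₂ γ hγ).trans ?_
  refine ereal_add3_le fun a b d ha hb hd => ?_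
  obtain ⟨φ₁, h1, h1a⟩ := ent_strong F₁ γ.fst μ₁ ha
  obtain ⟨φ₂, h2, h2a⟩ := ent_strong F₂ γ.snd μ₂ hb
  obtain ⟨f, hf, hfa⟩ := cost_strong C hClsc hK hCconv γ hd
  have := hmain φ₁ φ₂ h1 h2 f hf
  rw [dualJ] at this
  linarith
end
end

section
/- Let X₁, X₂ be Polish metric spaces. If a set Q ⊂ 𝒫(X₁×X₂) is relatively compact in the weak* topology, then J(Q) ⊂ 𝒫(X₁ × 𝒫(X₂)) is relatively compact in the weak* topology, where J(γ) := (T_γ)_# γ₁ with T_γ : X₁ → X₁ × 𝒫(X₂), x₁ ↦ (x₁, γ_{x₁}). -/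
open MeasureTheory Filter Set Topology
open scoped ENNReal NNReal BoundedContinuousFunction

noncomputable section

theorem tight_of_polish {Y : Type*} [TopologicalSpace Y] [PolishSpace Y] [MeasurableSpace Y]
    [BorelSpace Y] {S : Set (ProbabilityMeasure Y)} (hS : IsCompact (closure S)) :
    IsTightMeasureSet {((μ : ProbabilityMeasure Y) : Measure Y) | μ ∈ S} := by
  let := TopologicalSpace.upgradeIsCompletelyMetrizable Y
  exact isTightMeasureSet_of_isCompact_closure hS

theorem stmt4
    {X₁ : Type*} [MetricSpace X₁] [PolishSpace X₁] [MeasurableSpace X₁] [BorelSpace X₁]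
    {X₂ : Type*} [MetricSpace X₂] [PolishSpace X₂] [MeasurableSpace X₂] [BorelSpace X₂]
    [Nonempty X₂] :
    letI : MeasurableSpace (ProbabilityMeasure X₂) := borel (ProbabilityMeasure X₂)
    haveI : BorelSpace (ProbabilityMeasure X₂) := ⟨rfl⟩
    ∀ Q : Set (ProbabilityMeasure (X₁ × X₂)), IsCompact (closure Q) →
      IsCompact (closure { P : ProbabilityMeasure (X₁ × ProbabilityMeasure X₂) |
        ∃ γ ∈ Q, (P : Measure (X₁ × ProbabilityMeasure X₂)) =
          Measure.map (fun x₁ => ((x₁,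
              ⟨(γ : Measure (X₁ × X₂)).condKernel x₁, inferInstance⟩) :
                X₁ × ProbabilityMeasure X₂))
            ((γ : Measure (X₁ × X₂)).fst) }) := by
  intro Q hQ
  let : MeasurableSpace (ProbabilityMeasure X₂) := borel (ProbabilityMeasure X₂)
  have : BorelSpace (ProbabilityMeasure X₂) := ⟨rfl⟩
  have hT : IsTightMeasureSet {((μ : ProbabilityMeasure (X₁ × X₂)) : Measure (X₁ × X₂)) | μ ∈ Q} := by
    exact tight_of_polish hQ
  rw [isTightMeasureSet_iff_exists_isCompact_measure_compl_le] at hT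
  apply isCompact_closure_of_isTightMeasureSet
  rw [isTightMeasureSet_iff_exists_isCompact_measure_compl_le]
  intro ε hε
  obtain ⟨C₀, hC₀, hC₀le⟩ := hT (ε / 2) (ENNReal.half_pos hε.ne')
  obtain ⟨δ, hδ, hδsum⟩ := ENNReal.exists_pos_sum_of_countable' (ENNReal.half_pos hε.ne').ne' ℕ
  let u : ℕ → ℝ≥0 := fun n => (1 / 2) ^ n
  have hu0 : ∀ n, 0 < u n := fun n => by positivity
  have hu : Tendsto u atTop (𝓝 0) :=
    NNReal.tendsto_pow_atTop_nhds_zero_of_lt_one (by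
      rw [← NNReal.coe_lt_coe]; push_cast; norm_num)
  have hC : ∀ n, ∃ C : Set (X₁ × X₂), IsCompact C ∧
      ∀ μ ∈ {((μ : ProbabilityMeasure (X₁ × X₂)) : Measure (X₁ × X₂)) | μ ∈ Q},
        μ Cᶜ ≤ u n * δ n := fun n =>
    hT _ (ENNReal.mul_pos (by exact_mod_cast (hu0 n).ne') (hδ n).ne')
  choose C hCc hCle using hC
  let K : ℕ → Set X₂ := fun n => Prod.snd '' C n
  have hK : ∀ n, IsCompact (K n) := fun n => (hCc n).image continuous_snd
  let A : Set (ProbabilityMeasure X₂) := {μ | ∀ n, μ (K n)ᶜ ≤ u n}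
  have hA : IsCompact A :=
    isCompact_setOfPred_probabilityMeasure_mass_eq_compl_isCompact_le hu hK (Or.inl inferInstance)
  have key : ∀ p : ProbabilityMeasure X₂, p ∉ A →
      ∃ n, (u n : ℝ≥0∞) ≤ (p : Measure X₂) (K n)ᶜ := by
    intro p hp
    obtain ⟨n, hn⟩ : ∃ n, u n < p (K n)ᶜ := by
      by_contra! h
      exact hp h
    refine ⟨n, ?_⟩
    have h3 := (ENNReal.coe_lt_coe.2 hn).le
    rwa [ProbabilityMeasure.ennreal_coeFn_eq_coeFn_toMeasure] at h3
  have hK₁ : IsCompact (Prod.fst '' C₀) := hC₀.image continuous_fst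
  refine ⟨(Prod.fst '' C₀) ×ˢ A, hK₁.prod hA, ?_⟩
  rintro _ ⟨P, ⟨γ, hγ, hP⟩, rfl⟩
  have hmem : (γ : Measure (X₁ × X₂)) ∈
      {((μ : ProbabilityMeasure (X₁ × X₂)) : Measure (X₁ × X₂)) | μ ∈ Q} := ⟨γ, hγ, rfl⟩
  have hae : AEMeasurable (fun x₁ => ((x₁,
              ⟨(γ : Measure (X₁ × X₂)).condKernel x₁, inferInstance⟩) :
                X₁ × ProbabilityMeasure X₂)) ((γ : Measure (X₁ × X₂)).fst) := by
    by_contra h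
    rw [Measure.map_of_not_aemeasurable h] at hP
    exact (IsProbabilityMeasure.ne_zero (P : Measure (X₁ × ProbabilityMeasure X₂))) hP
  have hmK : ∀ n, MeasurableSet (K n)ᶜ := fun n => (hK n).measurableSet.compl
  rw [hP, Measure.map_apply_of_aemeasurable hae
    (hK₁.measurableSet.prod hA.measurableSet).compl]
  have hsub : (fun x₁ => ((x₁,
              ⟨(γ : Measure (X₁ × X₂)).condKernel x₁, inferInstance⟩) :
                X₁ × ProbabilityMeasure X₂)) ⁻¹' ((Prod.fst '' C₀) ×ˢ A)ᶜ ⊆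
      (Prod.fst '' C₀)ᶜ ∪
        ⋃ n, {x | (u n : ℝ≥0∞) ≤ (γ : Measure (X₁ × X₂)).condKernel x (K n)ᶜ} := by
    intro x hx
    by_cases h1 : x ∈ Prod.fst '' C₀
    · right
      have h2 : (⟨(γ : Measure (X₁ × X₂)).condKernel x, inferInstance⟩ :
          ProbabilityMeasure X₂) ∉ A := fun h => hx ⟨h1, h⟩
      obtain ⟨n, hn⟩ := key _ h2
      exact mem_iUnion.2 ⟨n, hn⟩
    · exact Or.inl h1
  have hfst : (γ : Measure (X₁ × X₂)).fst (Prod.fst '' C₀)ᶜ ≤ ε / 2 := by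
    rw [Measure.fst_apply hK₁.measurableSet.compl]
    refine (measure_mono ?_).trans (hC₀le _ hmem)
    intro z hz hzC
    exact hz ⟨z, hzC, rfl⟩
  have hn : ∀ n, (γ : Measure (X₁ × X₂)).fst
      {x | (u n : ℝ≥0∞) ≤ (γ : Measure (X₁ × X₂)).condKernel x (K n)ᶜ} ≤ δ n := by
    intro n
    have h1 := mul_meas_ge_le_lintegral (μ := (γ : Measure (X₁ × X₂)).fst)
      ((γ : Measure (X₁ × X₂)).condKernel.measurable_coe (hmK n)) (u n : ℝ≥0∞)
    have h2 := Measure.lintegral_condKernel_mem (ρ := (γ : Measure (X₁ × X₂)))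
      (s := Prod.snd ⁻¹' (K n)ᶜ) (measurable_snd (hmK n))
    have h3 : (γ : Measure (X₁ × X₂)) (Prod.snd ⁻¹' (K n)ᶜ) ≤ u n * δ n := by
      refine (measure_mono ?_).trans (hCle n _ hmem)
      intro z hz hzC
      exact hz ⟨z, hzC, rfl⟩
    have h4 := h1.trans ((le_of_eq h2).trans h3)
    exact (ENNReal.mul_le_mul_iff_right (by exact_mod_cast (hu0 n).ne') ENNReal.coe_ne_top).1 h4
  calc _ ≤ _ := measure_mono hsub
    _ ≤ _ := measure_union_le _ _
    _ ≤ ε / 2 + ∑' n, δ n := by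
      gcongr
      exact (measure_iUnion_le _).trans (ENNReal.tsum_le_tsum hn)
    _ ≤ ε / 2 + ε / 2 := by gcongr
    _ = ε := ENNReal.add_halves ε
end
end

section
/- Let X₁, X₂ be Polish metric spaces and let C : X₁ × 𝒫(X₂) → (−∞,+∞] be lower semi-continuous, bounded from below, with C(x₁,·) convex on 𝒫(X₂) for every x₁ ∈ X₁. If {π^k} ⊂ ℳ(X₁×X₂) converges to π in the weak* topology, then liminf_{k→∞} ∫_{X₁} C(x₁, π^k_{x₁}) dπ^k₁(x₁) ≥ ∫_{X₁} C(x₁, π_{x₁}) dπ₁(x₁). -/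
open MeasureTheory Filter Set Topology
open scoped ENNReal NNReal BoundedContinuousFunction

noncomputable section

set_option linter.style.haveILetI false
set_option linter.unusedSectionVars false

namespace WLSC
open ProbabilityTheory TopologicalSpace


section PH
variable (H : Type*) [TopologicalSpace H] [CompactSpace H] [PolishSpace H] [MeasurableSpace H]
  [BorelSpace H]

theorem wl_inducing {Ω : Type*} [TopologicalSpace Ω] [MeasurableSpace Ω] [OpensMeasurableSpace Ω] :
    IsInducing (fun (p : ProbabilityMeasure Ω) (φ : Ω →ᵇ ℝ) => ∫ y, φ y ∂(p : Measure Ω)) := by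
  rw [isInducing_iff_nhds]
  intro p
  apply le_antisymm
  · rw [← tendsto_iff_comap]
    rw [tendsto_pi_nhds]
    intro φ
    exact (ProbabilityMeasure.tendsto_iff_forall_integral_tendsto.mp tendsto_id) φ
  · have : Tendsto (fun q : ProbabilityMeasure Ω => q)
      (comap (fun (p : ProbabilityMeasure Ω) (φ : Ω →ᵇ ℝ) => ∫ y, φ y ∂(p : Measure Ω))
        (𝓝 (fun φ : Ω →ᵇ ℝ => ∫ y, φ y ∂(p : Measure Ω)))) (𝓝 p) := by
      rw [ProbabilityMeasure.tendsto_iff_forall_integral_tendsto]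
      intro φ
      have := tendsto_comap (f := (fun (p : ProbabilityMeasure Ω) (φ : Ω →ᵇ ℝ) => ∫ y, φ y ∂(p : Measure Ω))) (x := (𝓝 (fun φ : Ω →ᵇ ℝ => ∫ y, φ y ∂(p : Measure Ω))))
      rw [tendsto_pi_nhds] at this
      exact this φ
    exact this

theorem wl_secondCountable : SecondCountableTopology (ProbabilityMeasure H) := by
  letI : MetricSpace (ProbabilityMeasure H) := metrizableSpaceMetric _
  infer_instance

theorem wl_polish : PolishSpace (ProbabilityMeasure H) := by
  letI : MetricSpace (ProbabilityMeasure H) := metrizableSpaceMetric _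
  infer_instance


def coeK (Ω : Type*) [MeasurableSpace Ω] : Kernel (ProbabilityMeasure Ω) Ω :=
  ⟨fun p => (p : Measure Ω), measurable_subtype_coe⟩

instance (Ω : Type*) [MeasurableSpace Ω] : IsMarkovKernel (coeK Ω) := ⟨fun p => by
  change IsProbabilityMeasure (p : Measure Ω); infer_instance⟩

theorem coeK_apply {Ω : Type*} [MeasurableSpace Ω] (p : ProbabilityMeasure Ω) :
    coeK Ω p = (p : Measure Ω) := rfl

theorem measurable_integral_pm {Ω : Type*} [TopologicalSpace Ω] [MeasurableSpace Ω]
    [OpensMeasurableSpace Ω] (φ : Ω →ᵇ ℝ) :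
    Measurable (fun p : ProbabilityMeasure Ω => ∫ y, φ y ∂(p : Measure Ω)) := by
  have := (StronglyMeasurable.integral_kernel (κ := coeK Ω) (f := φ) φ.continuous.measurable.stronglyMeasurable)
  exact this.measurable

theorem wl_borel : BorelSpace (ProbabilityMeasure H) := by
  haveI := wl_secondCountable H
  constructor
  apply le_antisymm
  · have : @Measurable _ _ (borel (ProbabilityMeasure H)) _ (fun p : ProbabilityMeasure H => (p : Measure H)) := by
      refine @Measurable.measure_of_isPiSystem_of_isProbabilityMeasure _ _ (borel (ProbabilityMeasure H)) _ _ _ {s | IsOpen s} ?_ isPiSystem_isOpen ?_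
      · exact BorelSpace.measurable_eq
      · intro G hG
        letI : MeasurableSpace (ProbabilityMeasure H) := borel _
        haveI : BorelSpace (ProbabilityMeasure H) := ⟨rfl⟩
        apply LowerSemicontinuous.measurable
        rw [lowerSemicontinuous_iff_le_liminf]
        intro p
        letI : MetricSpace H := metrizableSpaceMetric _
        exact ProbabilityMeasure.le_liminf_measure_open_of_tendsto tendsto_id hG
    rw [measurable_iff_comap_le] at this
    exact this
  · have h : (inferInstance : TopologicalSpace (ProbabilityMeasure H)) = generateFrom
      {s | ∃ (φ : H →ᵇ ℝ) (U : Set ℝ), IsOpen U ∧ (fun p : ProbabilityMeasure H => ∫ y, φ y ∂(p : Measure H)) ⁻¹' U = s} := by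
      apply le_antisymm
      · apply le_generateFrom
        rintro s ⟨φ, U, hU, rfl⟩
        exact hU.preimage ((continuous_apply φ).comp wl_inducing.continuous)
      · have := (wl_inducing (Ω := H)).eq_induced
        conv_rhs => rw [show (inferInstance : TopologicalSpace (ProbabilityMeasure H)) = _ from this]
        rw [← continuous_iff_le_induced]
        refine (@continuous_pi_iff _ _ _ (_) _ _).2 fun φ => ?_
        refine (@continuous_def _ _ (_) _ _).2 fun U hU => ?_
        apply isOpen_generateFrom_of_mem
        exact ⟨φ, U, hU, rfl⟩
    rw [borel_eq_generateFrom_of_subbasis h]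
    apply MeasurableSpace.generateFrom_le
    rintro s ⟨φ, U, hU, rfl⟩
    exact (measurable_integral_pm φ) hU.measurableSet
end PH

theorem moreau_yosida {Z : Type*} [PseudoEMetricSpace Z] (g : Z → ℝ≥0∞) (hg : LowerSemicontinuous g) :
    ∃ f : ℕ → Z → ℝ≥0∞, (∀ n, Continuous (f n)) ∧ (∀ n z, f n z ≤ n) ∧ Monotone f ∧
      (∀ n z, f n z ≤ g z) ∧
      ∀ z, ⨆ n, f n z = g z := by
  have hle : ∀ (n : ℕ) z, (⨅ w, min (g w) (n:ℝ≥0∞) + n * edist z w) ≤ min (g z) n := by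
    intro n z
    refine (iInf_le _ z).trans ?_
    simp
  refine ⟨fun n z => ⨅ w, min (g w) (n:ℝ≥0∞) + n * edist z w, ?_, ?_, ?_, ?_, ?_⟩
  · intro n
    refine continuous_of_le_add_edist n (ENNReal.natCast_ne_top n) fun x y => ?_
    rw [ENNReal.iInf_add]
    refine le_iInf fun w => (iInf_le _ w).trans ?_
    rw [add_assoc, ← mul_add]
    gcongr
    rw [add_comm]
    exact edist_triangle _ _ _
  · intro n z
    exact (hle n z).trans (min_le_right _ _)
  · intro m n hmn z
    dsimp only
    gcongr
  · intro n z
    exact (hle n z).trans (min_le_left _ _)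
  · intro z
    apply le_antisymm
    · exact iSup_le fun n => (hle n z).trans (min_le_left _ _)
    · refine le_of_forall_lt fun a ha => ?_
      obtain ⟨b, hab, hb⟩ := exists_between ha
      refine hab.trans_le ?_
      have hbt : b ≠ ⊤ := hb.ne_top
      obtain ⟨δ, hδ, hball⟩ := EMetric.mem_nhds_iff.1 (hg z b hb)
      obtain ⟨n₁, hn₁⟩ := ENNReal.exists_nat_gt hbt
      obtain ⟨n₂, hn₂⟩ := ENNReal.exists_nat_mul_gt hδ.ne' hbt
      refine le_trans ?_ (le_iSup _ (max n₁ n₂))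
      refine le_iInf fun w => ?_
      by_cases hw : edist w z < δ
      · refine le_add_right (le_min (hball hw : b < g w).le ?_)
        exact hn₁.le.trans (by exact_mod_cast le_max_left _ _)
      · refine le_add_left ?_
        refine hn₂.le.trans ?_
        push Not at hw
        rw [edist_comm]
        gcongr
        exact le_max_right _ _

theorem lsc_lintegral_le_liminf {Z : Type*} [TopologicalSpace Z] [PseudoMetrizableSpace Z]
    [MeasurableSpace Z] [OpensMeasurableSpace Z] {ι : Type*} {L : Filter ι}
    {μs : ι → FiniteMeasure Z} {μ : FiniteMeasure Z} (h : Tendsto μs L (𝓝 μ))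
    (g : Z → ℝ≥0∞) (hg : LowerSemicontinuous g) :
    ∫⁻ z, g z ∂(μ : Measure Z) ≤ liminf (fun i => ∫⁻ z, g z ∂(μs i : Measure Z)) L := by
  rcases L.eq_or_neBot with rfl | hL
  · simp [liminf_eq]
  letI : PseudoMetricSpace Z := pseudoMetrizableSpacePseudoMetric Z
  obtain ⟨f, hc, hb, hm, hle, hs⟩ := moreau_yosida g hg
  have : ∫⁻ z, g z ∂(μ : Measure Z) = ⨆ n, ∫⁻ z, f n z ∂(μ : Measure Z) := by
    rw [← lintegral_iSup (fun n => (hc n).measurable) hm]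
    simp_rw [hs]
  rw [this]
  refine iSup_le fun n => ?_
  have hft : ∀ z, f n z ≠ ⊤ := fun z => ((hb n z).trans_lt (ENNReal.natCast_lt_top n)).ne
  let φ : Z →ᵇ ℝ≥0 := BoundedContinuousFunction.mkOfBound
    ⟨fun z => (f n z).toNNReal, ENNReal.continuousOn_toNNReal.comp_continuous (hc n) hft⟩ n (by
      intro x y
      have h1 : (f n x).toNNReal ≤ n := by
        simpa using ENNReal.toNNReal_mono (ENNReal.natCast_ne_top n) (hb n x)
      have h2 : (f n y).toNNReal ≤ n := by
        simpa using ENNReal.toNNReal_mono (ENNReal.natCast_ne_top n) (hb n y)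
      rw [NNReal.dist_eq]
      have h1' : ((f n x).toNNReal : ℝ) ≤ n := by exact_mod_cast h1
      have h2' : ((f n y).toNNReal : ℝ) ≤ n := by exact_mod_cast h2
      have h3 : (0:ℝ) ≤ (f n x).toNNReal := NNReal.coe_nonneg _
      have h4 : (0:ℝ) ≤ (f n y).toNNReal := NNReal.coe_nonneg _
      simp only [ContinuousMap.coe_mk]
      rw [abs_le]; constructor <;> linarith)
  have hφ : ∀ z, (φ z : ℝ≥0∞) = f n z := fun z => ENNReal.coe_toNNReal (hft z)
  have ht := FiniteMeasure.tendsto_iff_forall_lintegral_tendsto.1 h φ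
  simp_rw [hφ] at ht
  rw [← ht.liminf_eq]
  exact liminf_le_liminf (Eventually.of_forall fun i => lintegral_mono (hle n))
theorem jensen_lsc {P : Type*} [TopologicalSpace P] {H : Type*} [TopologicalSpace H]
    [MeasurableSpace H] [OpensMeasurableSpace H] (F : P → ProbabilityMeasure H) (hF : IsInducing F)
    (g : P → ℝ≥0∞) (hg : LowerSemicontinuous g)
    (hconv : ∀ (p q : P) (s t : ℝ), 0 ≤ s → 0 ≤ t → s + t = 1 → ∃ m,
      (F m : Measure H) = ENNReal.ofReal s • (F p : Measure H) + ENNReal.ofReal t • (F q : Measure H)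
      ∧ g m ≤ ENNReal.ofReal s * g p + ENNReal.ofReal t * g q)
    (G : ProbabilityMeasure H → ℝ≥0∞) (Q : Measure (ProbabilityMeasure H)) [IsProbabilityMeasure Q]
    (hG : AEMeasurable G Q)
    (hGF : ∀ p, G (F p) = g p)
    (hrange : ∀ᵐ p ∂Q, p ∈ range F) (q : P)
    (hbar : ∀ φ : H →ᵇ ℝ, ∫ p : ProbabilityMeasure H, (∫ y, φ y ∂(p : Measure H)) ∂Q = ∫ y, φ y ∂(F q : Measure H)) :
    g q ≤ ∫⁻ p, G p ∂Q := by
  by_contra! hlt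
  obtain ⟨b, hb1, hb2⟩ := exists_between hlt
  have hbt : b ≠ ⊤ := hb2.ne_top
  have hnh := hg q b hb2
  have hind := (wl_inducing (Ω := H)).comp hF
  have hnh' : {p | b < g p} ∈ 𝓝 q := hnh
  rw [hind.nhds_eq_comap, mem_comap] at hnh'
  obtain ⟨V, hV, hVsub⟩ := hnh'
  rw [nhds_pi, Filter.mem_pi] at hV
  obtain ⟨I, hI, t, ht, htV⟩ := hV
  haveI : Fintype I := hI.fintype
  let A : Set ((I → ℝ) × ℝ) := {v | ∃ p, (∀ φ : I, v.1 φ = ∫ y, φ.1 y ∂(F p : Measure H)) ∧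
    g p ≤ ENNReal.ofReal v.2 ∧ 0 ≤ v.2}
  have hA : Convex ℝ A := by
    rintro v ⟨p, hp1, hp2, hp3⟩ w ⟨p', hq1, hq2, hq3⟩ s r hs hr hsr
    obtain ⟨m, hm1, hm2⟩ := hconv p p' s r hs hr hsr
    refine ⟨m, fun φ => ?_, ?_, ?_⟩
    · rw [hm1, integral_add_measure, integral_smul_measure, integral_smul_measure,
        ENNReal.toReal_ofReal hs, ENNReal.toReal_ofReal hr]
      · simp [hp1 φ, hq1 φ]
      · exact (φ.1.integrable _).smul_measure ENNReal.ofReal_ne_top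
      · exact (φ.1.integrable _).smul_measure ENNReal.ofReal_ne_top
    · refine hm2.trans ?_
      simp only [Prod.snd_add, Prod.smul_snd, smul_eq_mul]
      rw [ENNReal.ofReal_add (by positivity) (by positivity), ENNReal.ofReal_mul hs,
        ENNReal.ofReal_mul hr]
      gcongr
    · simp only [Prod.snd_add, Prod.smul_snd, smul_eq_mul]
      positivity
  have hfin : ∫⁻ p, G p ∂Q ≠ ⊤ := hlt.ne_top
  have hmem : ∀ᵐ p : ProbabilityMeasure H ∂Q, ((fun φ : I => ∫ y, φ.1 y ∂(p : Measure H)), (G p).toReal) ∈ closure A := by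
    filter_upwards [hrange, ae_lt_top' hG hfin] with p hp hp2
    obtain ⟨p', rfl⟩ := hp
    refine subset_closure ⟨p', fun φ => rfl, ?_, ENNReal.toReal_nonneg⟩
    dsimp only
    rw [ENNReal.ofReal_toReal hp2.ne, hGF]
  have hi1 : ∀ φ : H →ᵇ ℝ, Integrable (fun p : ProbabilityMeasure H => ∫ y, φ y ∂(p : Measure H)) Q := by
    intro φ
    refine Integrable.of_bound (measurable_integral_pm φ).aestronglyMeasurable ‖φ‖ ?_
    refine Eventually.of_forall fun p => ?_
    exact φ.norm_integral_le_norm _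
  have hi2 : Integrable (fun p => (G p).toReal) Q := integrable_toReal_of_lintegral_ne_top hG hfin
  have hi3 : Integrable (fun (p : ProbabilityMeasure H) (φ : I) => ∫ y, φ.1 y ∂(p : Measure H)) Q :=
    Integrable.of_eval fun φ => hi1 φ.1
  have hint := hA.closure.integral_mem isClosed_closure hmem (hi3.prodMk hi2)
  rw [integral_pair hi3 hi2, integral_toReal hG (ae_lt_top' hG hfin)] at hint
  rw [mem_closure_iff_nhds] at hint
  have hU : {v : (I → ℝ) × ℝ | (∀ φ : I, v.1 φ ∈ t φ.1) ∧ v.2 < b.toReal} ∈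
      𝓝 ((∫ p : ProbabilityMeasure H, (fun φ : I => ∫ y, φ.1 y ∂(p : Measure H)) ∂Q), (∫⁻ p, G p ∂Q).toReal) := by
    rw [nhds_prod_eq]
    refine prod_mem_prod (s := {v : I → ℝ | (∀ φ : I, v φ ∈ t φ.1)}) (t := {x | x < b.toReal}) ?_ ?_
    · rw [nhds_pi]
      have := Filter.pi_mem_pi (I := univ) (f := fun φ : I => 𝓝 ((∫ p : ProbabilityMeasure H, (fun φ : I => ∫ y, φ.1 y ∂(p : Measure H)) ∂Q) φ)) (s := fun φ : I => t φ.1) finite_univ (fun φ _ => ?_)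
      · refine mem_of_superset this fun v hv φ => hv φ (mem_univ _)
      · rw [eval_integral (fun φ : I => hi1 φ.1) φ, hbar]
        exact ht φ.1
    · exact Iio_mem_nhds ((ENNReal.toReal_lt_toReal hfin hbt).2 hb1)
  obtain ⟨v, ⟨hv1, hv2⟩, p, hp1, hp2, hp3⟩ := hint _ hU
  have : b < g p := hVsub (htV (fun φ hφ => by
    have := hv1 ⟨φ, hφ⟩
    rw [hp1] at this
    exact this))
  have h2 : ENNReal.ofReal v.2 < b := by
    rw [ENNReal.ofReal_lt_iff_lt_toReal hp3 hbt]; exact hv2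
  exact absurd (this.trans_le hp2) h2.le.not_gt
theorem lsc_extend {A B : Type*} [TopologicalSpace A] [TopologicalSpace B] (E : A → B)
    (hE : IsInducing E) (c : A → ℝ≥0∞) (hc : LowerSemicontinuous c) :
    ∃ c' : B → ℝ≥0∞, LowerSemicontinuous c' ∧ ∀ a, c' (E a) = c a := by
  refine ⟨fun z => ⨆ (U : Set B) (_ : IsOpen U ∧ z ∈ U), ⨅ a ∈ E ⁻¹' U, c a, ?_, ?_⟩
  · intro z y hy
    dsimp only at hy
    obtain ⟨U, hU⟩ := lt_iSup_iff.1 hy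
    obtain ⟨hU1, hU2⟩ := lt_iSup_iff.1 hU
    filter_upwards [hU1.1.mem_nhds hU1.2] with z' hz'
    exact hU2.trans_le (le_iSup₂_of_le U ⟨hU1.1, hz'⟩ le_rfl)
  · intro a
    apply le_antisymm
    · exact iSup₂_le fun U hU => iInf₂_le a hU.2
    · refine le_of_forall_lt fun y hy => ?_
      obtain ⟨b, hyb, hb⟩ := exists_between hy
      have h : {a | b < c a} ∈ 𝓝 a := hc a b hb
      rw [hE.nhds_eq_comap, mem_comap] at h
      obtain ⟨V, hV, hs⟩ := h
      obtain ⟨U, hUV, hU, haU⟩ := mem_nhds_iff.1 hV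
      refine hyb.trans_le ?_
      refine le_iSup₂_of_le U ⟨hU, haU⟩ ?_
      exact le_iInf₂ fun a' ha' => (hs (hUV ha') : b < c a').le

noncomputable def mapPM {Y H : Type*} [MeasurableSpace Y] [MeasurableSpace H] (i : Y → H) (hi : Measurable i)
    (p : ProbabilityMeasure Y) : ProbabilityMeasure H := p.map hi.aemeasurable

theorem mapPM_coe {Y H : Type*} [MeasurableSpace Y] [MeasurableSpace H] (i : Y → H) (hi : Measurable i)
    (p : ProbabilityMeasure Y) : (mapPM i hi p : Measure H) = (p : Measure Y).map i := rfl

theorem mapPM_measurable {Y H : Type*} [MeasurableSpace Y] [MeasurableSpace H] (i : Y → H) (hi : Measurable i) :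
    Measurable (mapPM i hi) := by
  apply Measurable.subtype_mk
  exact (Measure.measurable_map i hi).comp measurable_subtype_coe

theorem mapPM_range {Y H : Type*} [MeasurableSpace Y] [MeasurableSpace H] (i : Y → H)
    (hi : MeasurableEmbedding i) (p : ProbabilityMeasure H) (hp : (p : Measure H) (range i)ᶜ = 0) :
    p ∈ range (mapPM i hi.measurable) := by
  have h1 : ((p : Measure H).comap i).map i = p := by
    rw [hi.map_comap]
    exact Measure.restrict_eq_self_of_ae_mem hp
  have : IsProbabilityMeasure ((p : Measure H).comap i) := by
    have : IsProbabilityMeasure (((p : Measure H).comap i).map i) := by rw [h1]; infer_instance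
    exact Measure.isProbabilityMeasure_of_map i
  refine ⟨⟨(p : Measure H).comap i, this⟩, ?_⟩
  apply Subtype.ext
  exact h1

theorem mapPM_inducing {Y H : Type*} [TopologicalSpace Y] [MeasurableSpace Y]
    [BorelSpace Y] [PseudoMetrizableSpace Y]
    [TopologicalSpace H] [CompactSpace H] [PolishSpace H] [MeasurableSpace H]
    [BorelSpace H] (i : Y → H) (hi : IsEmbedding i) :
    IsInducing (mapPM i hi.continuous.measurable) := by
  have hc : Continuous (mapPM i hi.continuous.measurable) :=
    ProbabilityMeasure.continuous_map hi.continuous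
  rw [isInducing_iff_nhds]
  intro p
  apply le_antisymm
  · exact hc.continuousAt.tendsto.le_comap
  · have : Tendsto id (comap (mapPM i hi.continuous.measurable) (𝓝 (mapPM i hi.continuous.measurable p))) (𝓝 p) := by
      apply tendsto_of_forall_isOpen_le_liminf'
      intro G hG
      obtain ⟨G', hG', rfl⟩ := hi.isInducing.isOpen_iff.1 hG
      have h := ProbabilityMeasure.le_liminf_measure_open_of_tendsto
        (tendsto_comap (f := (mapPM i hi.continuous.measurable)) (x := (𝓝 (mapPM i hi.continuous.measurable p)))) hG'
      simp only [mapPM_coe, Measure.map_apply hi.continuous.measurable hG'.measurableSet] at h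
      exact h
    exact this
theorem compProd_map_left {A B D : Type*} [MeasurableSpace A] [MeasurableSpace B] [MeasurableSpace D]
    (μ : Measure A) [IsFiniteMeasure μ] (f : A → B) (hf : Measurable f) (κ : Kernel B D) [IsMarkovKernel κ] :
    (μ.map f) ⊗ₘ κ = (μ ⊗ₘ (κ.comap f hf)).map (Prod.map f id) := by
  ext s hs
  have hm : Measurable (Prod.map f (id : D → D)) := hf.prodMap measurable_id
  rw [Measure.compProd_apply hs, Measure.map_apply hm hs, Measure.compProd_apply (hm hs),
    lintegral_map (Kernel.measurable_kernel_prodMk_left hs) hf]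
  rfl

theorem compProd_map_right {A B D : Type*} [MeasurableSpace A] [MeasurableSpace B] [MeasurableSpace D]
    (μ : Measure A) [IsFiniteMeasure μ] (f : B → D) (hf : Measurable f) (κ : Kernel A B) [IsMarkovKernel κ] :
    μ ⊗ₘ (κ.map f) = (μ ⊗ₘ κ).map (Prod.map id f) := by
  haveI : IsMarkovKernel (κ.map f) := Kernel.IsMarkovKernel.map κ hf
  ext s hs
  have hm : Measurable (Prod.map (id : A → A) f) := measurable_id.prodMap hf
  rw [Measure.compProd_apply hs, Measure.map_apply hm hs, Measure.compProd_apply (hm hs)]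
  congr 1 with x
  rw [Kernel.map_apply _ hf, Measure.map_apply hf (measurable_prodMk_left hs)]
  rfl

/-- the disintegration as a probability measure -/
noncomputable def dis {X Y : Type*} [MeasurableSpace X] [MeasurableSpace Y] [StandardBorelSpace Y]
    [Nonempty Y] (ρ : Measure (X × Y)) [IsFiniteMeasure ρ] (x : X) : ProbabilityMeasure Y :=
  ⟨ρ.condKernel x, inferInstance⟩

theorem dis_measurable {X Y : Type*} [MeasurableSpace X] [MeasurableSpace Y] [StandardBorelSpace Y]
    [Nonempty Y] (ρ : Measure (X × Y)) [IsFiniteMeasure ρ] : Measurable (dis ρ) :=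
  Measurable.subtype_mk ρ.condKernel.measurable

section core
variable {X₁ X₂ H : Type*} [MeasurableSpace X₁] [MeasurableSpace X₂] [StandardBorelSpace X₂]
    [Nonempty X₂] [TopologicalSpace H] [MeasurableSpace H] [BorelSpace H]
  (i₁ : X₁ → H) (i₂ : X₂ → H) (h₂ : Measurable i₂)
  (ρ : Measure (X₁ × X₂)) [IsFiniteMeasure ρ]

/-- lift of a transport plan -/
noncomputable def lawE : Measure (H × ProbabilityMeasure H) :=
  ρ.fst.map (fun x => (i₁ x, mapPM i₂ h₂ (dis ρ x)))

theorem lawE_meas (h₁ : Measurable i₁) : Measurable (fun x => (i₁ x, mapPM i₂ h₂ (dis ρ x))) :=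
  h₁.prodMk ((mapPM_measurable i₂ h₂).comp (dis_measurable ρ))

instance : IsFiniteMeasure (lawE i₁ i₂ h₂ ρ) := by unfold lawE; infer_instance

theorem lawE_univ (h₁ : Measurable i₁) : lawE i₁ i₂ h₂ ρ univ = ρ univ := by
  rw [lawE, Measure.map_apply (lawE_meas i₁ i₂ h₂ ρ h₁) MeasurableSet.univ, preimage_univ, Measure.fst_univ]

theorem lawE_integral (h₁ : Measurable i₁) [SecondCountableTopology H] (f h : H →ᵇ ℝ) :
    ∫ z, f z.1 * (∫ y, h y ∂(z.2 : Measure H)) ∂(lawE i₁ i₂ h₂ ρ)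
      = ∫ w, f (i₁ w.1) * h (i₂ w.2) ∂ρ := by
  have hm := lawE_meas i₁ i₂ h₂ ρ h₁
  have hmF : Measurable (fun z : H × ProbabilityMeasure H => f z.1 * (∫ y, h y ∂(z.2 : Measure H))) :=
    (f.continuous.measurable.comp measurable_fst).mul ((measurable_integral_pm h).comp measurable_snd)
  rw [lawE, integral_map hm.aemeasurable hmF.aestronglyMeasurable]
  conv_rhs => rw [← ρ.disintegrate ρ.condKernel]
  have hmG : Measurable (fun w : X₁ × X₂ => f (i₁ w.1) * h (i₂ w.2)) :=
    (f.continuous.measurable.comp (h₁.comp measurable_fst)).mul (h.continuous.measurable.comp (h₂.comp measurable_snd))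
  rw [Measure.integral_compProd]
  · congr 1 with x
    simp only [integral_const_mul]
    congr 1
    rw [mapPM_coe, integral_map h₂.aemeasurable h.continuous.measurable.aestronglyMeasurable]
    rfl
  · refine Integrable.of_bound hmG.aestronglyMeasurable (‖f‖ * ‖h‖) (Eventually.of_forall fun w => ?_)
    rw [norm_mul]
    gcongr
    · exact f.norm_coe_le_norm _
    · exact h.norm_coe_le_norm _

end core
theorem limit_ident {X₁ X₂ H : Type*} [MeasurableSpace X₁] [MeasurableSpace X₂]
    [StandardBorelSpace X₂] [Nonempty X₂]
    [TopologicalSpace H] [CompactSpace H] [PolishSpace H] [MeasurableSpace H] [BorelSpace H]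
    [Nonempty H] [StandardBorelSpace (ProbabilityMeasure H)] [Nonempty (ProbabilityMeasure H)]
    (i₁ : X₁ → H) (h₁ : MeasurableEmbedding i₁) (i₂ : X₂ → H) (h₂ : Measurable i₂)
    (ρ : Measure (X₁ × X₂)) [IsFiniteMeasure ρ]
    (P : Measure (H × ProbabilityMeasure H)) [IsFiniteMeasure P]
    (hP : ∀ f h : H →ᵇ ℝ, ∫ z, f z.1 * (∫ y, h y ∂(z.2 : Measure H)) ∂P
      = ∫ w, f (i₁ w.1) * h (i₂ w.2) ∂ρ) :
    P.fst = ρ.fst.map i₁ ∧ ∀ᵐ x ∂ρ.fst, (coeK H ∘ₖ P.condKernel) (i₁ x) = (ρ.condKernel x).map i₂ := by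
  have hprod : Measurable (Prod.map i₁ i₂) := h₁.measurable.prodMap h₂
  have hstar : P.fst ⊗ₘ (coeK H ∘ₖ P.condKernel) = ρ.map (Prod.map i₁ i₂) := by
    apply Measure.ext_of_integral_mul_boundedContinuousFunction
    intro f h
    have hmG : Measurable (fun w : H × H => f w.1 * h w.2) :=
      (f.continuous.measurable.comp measurable_fst).mul (h.continuous.measurable.comp measurable_snd)
    rw [integral_map hprod.aemeasurable hmG.aestronglyMeasurable]
    refine Eq.trans ?_ (hP f h)
    have hmF : Measurable (fun z : H × ProbabilityMeasure H => f z.1 * (∫ y, h y ∂(z.2 : Measure H))) :=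
      (f.continuous.measurable.comp measurable_fst).mul ((measurable_integral_pm h).comp measurable_snd)
    conv_rhs => rw [← P.disintegrate P.condKernel]
    rw [Measure.integral_compProd, Measure.integral_compProd]
    · congr 1 with z
      simp only [integral_const_mul]
      congr 1
      rw [Kernel.integral_comp (h.integrable _)]
      rfl
    · refine Integrable.of_bound hmF.aestronglyMeasurable (‖f‖ * ‖h‖) (Eventually.of_forall fun w => ?_)
      rw [norm_mul]
      gcongr
      · exact f.norm_coe_le_norm _
      · exact h.norm_integral_le_norm _
    · refine Integrable.of_bound hmG.aestronglyMeasurable (‖f‖ * ‖h‖) (Eventually.of_forall fun w => ?_)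
      rw [norm_mul]
      gcongr
      · exact f.norm_coe_le_norm _
      · exact h.norm_coe_le_norm _
  have hfst : P.fst = ρ.fst.map i₁ := by
    have := congrArg Measure.fst hstar
    rw [Measure.fst_compProd] at this
    rw [this, Measure.fst, Measure.fst, Measure.map_map measurable_fst hprod,
      Measure.map_map h₁.measurable measurable_fst]
    rfl
  refine ⟨hfst, ?_⟩
  set b := coeK H ∘ₖ P.condKernel with hb
  let σ : Measure (X₁ × H) := ρ.map (Prod.map id i₂)
  have hid2 : Measurable (Prod.map (id : X₁ → X₁) i₂) := measurable_id.prodMap h₂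
  have hσ : σ.fst = ρ.fst := by
    rw [Measure.fst, Measure.map_map measurable_fst hid2]
    rfl
  haveI : IsMarkovKernel (ρ.condKernel.map i₂) := Kernel.IsMarkovKernel.map _ h₂
  have e1 : σ = σ.fst ⊗ₘ (ρ.condKernel.map i₂) := by
    rw [hσ, compProd_map_right _ _ h₂, ρ.disintegrate]
  have e2 : σ = σ.fst ⊗ₘ (b.comap i₁ h₁.measurable) := by
    have hme : MeasurableEmbedding (Prod.map i₁ (id : H → H)) := h₁.prodMap MeasurableEmbedding.id
    have : σ.map (Prod.map i₁ id) = (σ.fst ⊗ₘ (b.comap i₁ h₁.measurable)).map (Prod.map i₁ id) := by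
      rw [← compProd_map_left, hσ, ← hfst, hstar, Measure.map_map hme.measurable hid2]
      rfl
    have h3 := congrArg (Measure.comap (Prod.map i₁ id)) this
    rwa [hme.comap_map, hme.comap_map] at h3
  have a1 := eq_condKernel_of_measure_eq_compProd _ e1
  have a2 := eq_condKernel_of_measure_eq_compProd _ e2
  rw [hσ] at a1 a2
  filter_upwards [a1, a2] with x hx1 hx2
  rw [← hx1, Kernel.map_apply _ h₂, Kernel.comap_apply] at hx2
  exact hx2
theorem exists_ext {X₁ X₂ H : Type*} [TopologicalSpace X₁] 
    [MeasurableSpace X₁] [BorelSpace X₁] [TopologicalSpace X₂] [PolishSpace X₂]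
    [MeasurableSpace X₂] [BorelSpace X₂] [Nonempty X₂]
    [TopologicalSpace H] [CompactSpace H] [PolishSpace H] [MeasurableSpace H] [BorelSpace H]
    (i₁ : X₁ → H) (h₁ : IsEmbedding i₁) (i₂ : X₂ → H) (h₂ : IsEmbedding i₂)
    (c : X₁ → ProbabilityMeasure X₂ → ℝ≥0∞)
    (hc : LowerSemicontinuous fun q : X₁ × ProbabilityMeasure X₂ => c q.1 q.2) :
    ∃ c' : H × ProbabilityMeasure H → ℝ≥0∞, LowerSemicontinuous c' ∧ Measurable c' ∧
      ∀ x p, c' (i₁ x, mapPM i₂ h₂.continuous.measurable p) = c x p := by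
  haveI := wl_borel H
  haveI := wl_polish H
  obtain ⟨c', hc', h⟩ := lsc_extend (Prod.map i₁ (mapPM i₂ h₂.continuous.measurable))
    (h₁.isInducing.prodMap (mapPM_inducing i₂ h₂)) _ hc
  exact ⟨c', hc', hc'.measurable, fun x p => h (x, p)⟩

theorem core_ultra {X₁ X₂ H : Type*} [TopologicalSpace X₁] [PolishSpace X₁]
    [MeasurableSpace X₁] [BorelSpace X₁] [TopologicalSpace X₂] [PolishSpace X₂]
    [MeasurableSpace X₂] [BorelSpace X₂] [Nonempty X₂]
    [TopologicalSpace H] [CompactSpace H] [PolishSpace H] [MeasurableSpace H] [BorelSpace H]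
    (i₁ : X₁ → H) (h₁ : IsEmbedding i₁) (i₂ : X₂ → H) (h₂ : IsEmbedding i₂)
    (c : X₁ → ProbabilityMeasure X₂ → ℝ≥0∞)
    (hc : LowerSemicontinuous fun q : X₁ × ProbabilityMeasure X₂ => c q.1 q.2)
    (hconv : ∀ (x : X₁) (p q : ProbabilityMeasure X₂) (s t : ℝ), 0 ≤ s → 0 ≤ t → s + t = 1 → 
      ∃ m : ProbabilityMeasure X₂,
      (m : Measure X₂) = ENNReal.ofReal s • (p : Measure X₂) + ENNReal.ofReal t • (q : Measure X₂)
      ∧ c x m ≤ ENNReal.ofReal s * c x p + ENNReal.ofReal t * c x q)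
    (πk : ℕ → FiniteMeasure (X₁ × X₂)) (π : FiniteMeasure (X₁ × X₂)) (L : Ultrafilter ℕ)
    (hπ : Tendsto πk L (𝓝 π)) :
    ∫⁻ x, c x (dis (π : Measure (X₁ × X₂)) x) ∂(π : Measure (X₁ × X₂)).fst ≤
      liminf (fun k => ∫⁻ x, c x (dis (πk k : Measure (X₁ × X₂)) x) ∂(πk k : Measure (X₁ × X₂)).fst) L := by
  haveI := wl_borel H
  haveI := wl_polish H
  haveI : Nonempty H := ⟨i₂ (Classical.arbitrary X₂)⟩
  haveI : Nonempty (ProbabilityMeasure H) := ⟨⟨Measure.dirac (Classical.arbitrary H), inferInstance⟩⟩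
  have m₁ := h₁.continuous.measurableEmbedding h₁.injective
  have m₂ := h₂.continuous.measurableEmbedding h₂.injective
  obtain ⟨c', hc', hcm, hce⟩ := exists_ext i₁ h₁ i₂ h₂ c hc
  have hlaw : ∀ (ρ : Measure (X₁ × X₂)) [IsFiniteMeasure ρ],
      ∫⁻ z, c' z ∂(lawE i₁ i₂ m₂.measurable ρ) = ∫⁻ x, c x (dis ρ x) ∂ρ.fst := by
    intro ρ _
    rw [lawE, lintegral_map hcm (lawE_meas i₁ i₂ m₂.measurable ρ m₁.measurable)]
    simp_rw [hce]
  let Pk : ℕ → FiniteMeasure (H × ProbabilityMeasure H) := fun k =>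
    ⟨lawE i₁ i₂ m₂.measurable (πk k : Measure (X₁ × X₂)), inferInstance⟩
  have hmass : ∀ k, (Pk k).mass = (πk k).mass := by
    intro k
    have := lawE_univ i₁ i₂ m₂.measurable (πk k : Measure (X₁ × X₂)) m₁.measurable
    exact congrArg ENNReal.toNNReal this
  have hmt : Tendsto (fun k => (πk k).mass) L (𝓝 π.mass) :=
    (FiniteMeasure.continuous_mass.tendsto _).comp hπ
  have hK : ∀ᶠ k in (L : Filter ℕ), Pk k ∈ {μ : FiniteMeasure (H × ProbabilityMeasure H) | μ.mass ≤ π.mass + 1} := by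
    have : ∀ᶠ k in (L : Filter ℕ), (πk k).mass < π.mass + 1 := hmt (Iio_mem_nhds (by simp))
    filter_upwards [this] with k hk
    change (Pk k).mass ≤ _
    rw [hmass]
    exact hk.le
  obtain ⟨P, -, hP⟩ := (isCompact_setOfPred_finiteMeasure_le_of_compactSpace (H × ProbabilityMeasure H) (π.mass + 1)).ultrafilter_le_nhds' (L.map Pk) hK
  have hPt : Tendsto Pk L (𝓝 P) := hP
  have hid : ∀ f h : H →ᵇ ℝ, ∫ z, f z.1 * (∫ y, h y ∂(z.2 : Measure H)) ∂(P : Measure (H × ProbabilityMeasure H))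
      = ∫ w, f (i₁ w.1) * h (i₂ w.2) ∂(π : Measure (X₁ × X₂)) := by
    intro f h
    let Φ : (H × ProbabilityMeasure H) →ᵇ ℝ := BoundedContinuousFunction.mkOfCompact
      ⟨fun z => f z.1 * (∫ y, h y ∂(z.2 : Measure H)), (f.continuous.comp continuous_fst).mul
        (((continuous_apply h).comp wl_inducing.continuous).comp continuous_snd)⟩
    let Ψ : (X₁ × X₂) →ᵇ ℝ := (f.compContinuous ⟨fun w : X₁ × X₂ => i₁ w.1, h₁.continuous.comp continuous_fst⟩) *
      (h.compContinuous ⟨fun w : X₁ × X₂ => i₂ w.2, h₂.continuous.comp continuous_snd⟩)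
    have t1 := FiniteMeasure.tendsto_iff_forall_integral_tendsto.1 hPt Φ
    have t2 := FiniteMeasure.tendsto_iff_forall_integral_tendsto.1 hπ Ψ
    refine tendsto_nhds_unique t1 (t2.congr fun k => ?_)
    exact (lawE_integral i₁ i₂ m₂.measurable (πk k : Measure (X₁ × X₂)) m₁.measurable f h).symm
  obtain ⟨hfst, hae⟩ := limit_ident i₁ m₁ i₂ m₂.measurable (π : Measure (X₁ × X₂))
    (P : Measure (H × ProbabilityMeasure H)) hid
  have hup := lsc_lintegral_le_liminf hPt c' hc'
  simp only [Pk, FiniteMeasure.toMeasure_mk, hlaw] at hup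
  refine le_trans ?_ hup
  rw [← (P : Measure (H × ProbabilityMeasure H)).disintegrate (P : Measure (H × ProbabilityMeasure H)).condKernel,
    Measure.lintegral_compProd hcm, hfst, lintegral_map hcm.lintegral_kernel_prod_right' m₁.measurable]
  refine lintegral_mono_ae ?_
  filter_upwards [hae] with x hx
  refine jensen_lsc (mapPM i₂ m₂.measurable) (mapPM_inducing i₂ h₂) (c x)
    (hc.comp (Continuous.prodMk_right x)) ?_ (fun p => c' (i₁ x, p)) _ 
    (hcm.comp measurable_prodMk_left).aemeasurable (hce x) ?_ _ ?_
  · intro p q s t hs ht hst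
    obtain ⟨m, hm1, hm2⟩ := hconv x p q s t hs ht hst
    refine ⟨m, ?_, hm2⟩
    simp only [mapPM_coe, hm1]
    rw [Measure.map_add _ _ m₂.measurable, Measure.map_smul, Measure.map_smul]
  · have hz : ∫⁻ p : ProbabilityMeasure H, (p : Measure H) (range i₂)ᶜ ∂((P : Measure (H × ProbabilityMeasure H)).condKernel (i₁ x)) = 0 := by
      have := congrArg (fun μ : Measure H => μ (range i₂)ᶜ) hx
      rw [Kernel.comp_apply' _ _ _ m₂.measurableSet_range.compl, Measure.map_apply m₂.measurable m₂.measurableSet_range.compl] at this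
      simpa [coeK_apply] using this
    have hme : Measurable (fun p : ProbabilityMeasure H => (p : Measure H) (range i₂)ᶜ) :=
      ((Measure.measurable_coe m₂.measurableSet_range.compl).comp measurable_subtype_coe)
    rw [lintegral_eq_zero_iff hme] at hz
    filter_upwards [hz] with p hp
    exact mapPM_range i₂ m₂ p hp
  · intro φ
    have := Kernel.integral_comp (κ := (P : Measure (H × ProbabilityMeasure H)).condKernel) (η := coeK H) (a := i₁ x) (f := φ) (φ.integrable _)
    rw [hx] at this
    exact this.symm

theorem exists_ultra {u : ℕ → ℝ≥0∞} {J : ℝ≥0∞} (h : ∀ L : Ultrafilter ℕ, (L : Filter ℕ) ≤ atTop →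
    J ≤ liminf u L) : J ≤ liminf u atTop := by
  by_contra! hlt
  obtain ⟨a, ha1, ha2⟩ := exists_between hlt
  have hf : ∃ᶠ k in atTop, u k < a := frequently_lt_of_liminf_lt (by isBoundedDefault) ha1
  haveI : (atTop ⊓ 𝓟 {k | u k < a}).NeBot := frequently_mem_iff_neBot.1 hf
  let L := Ultrafilter.of (atTop ⊓ 𝓟 {k | u k < a})
  have hL : (L : Filter ℕ) ≤ atTop ⊓ 𝓟 {k | u k < a} := Ultrafilter.of_le _
  have h1 := h L (hL.trans inf_le_left)
  have h2 : ∀ᶠ k in (L : Filter ℕ), u k < a := (le_principal_iff.1 (hL.trans inf_le_right))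
  have h3 : liminf u L ≤ a := liminf_le_of_frequently_le' (h2.mono fun k hk => hk.le).frequently
  exact absurd (h1.trans h3) ha2.not_ge

theorem posE_ident (N : ℝ) (hN : 0 ≤ N) (a : EReal) (ha : ((-N : ℝ) : EReal) ≤ a) :
    posE a + ENNReal.ofReal N = (a + (N : EReal)).toENNReal + posE (-a) := by
  induction a using EReal.rec with
  | bot => simp at ha
  | top => simp [posE]
  | coe r =>
    have hr : -N ≤ r := by exact_mod_cast ha
    have e1 : posE (r : EReal) = ENNReal.ofReal r := by simp [posE]
    have e2 : posE (-(r : EReal)) = ENNReal.ofReal (-r) := by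
      rw [← EReal.coe_neg]; unfold posE; rw [if_neg (EReal.coe_ne_top _), EReal.toReal_coe]
    rw [e1, e2, ← EReal.coe_add, EReal.toENNReal_of_ne_top (EReal.coe_ne_top _), EReal.toReal_coe]
    rcases le_total 0 r with h | h
    · rw [ENNReal.ofReal_of_nonpos (p := -r) (by linarith), add_zero, ENNReal.ofReal_add h hN]
    · rw [ENNReal.ofReal_of_nonpos h, zero_add, ← ENNReal.ofReal_add (by linarith) (by linarith)]
      congr 1; ring

theorem posE_neg_le (N : ℝ) (a : EReal) (ha : ((-N : ℝ) : EReal) ≤ a) :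
    posE (-a) ≤ ENNReal.ofReal N := by
  induction a using EReal.rec with
  | bot => simp at ha
  | top => simp [posE]
  | coe r =>
    have hr : -N ≤ r := by exact_mod_cast ha
    rw [← EReal.coe_neg]; unfold posE; rw [if_neg (EReal.coe_ne_top _), EReal.toReal_coe]
    exact ENNReal.ofReal_le_ofReal (by linarith)

theorem eIntegral_eq {α : Type*} [MeasurableSpace α] (μ : Measure α) [IsFiniteMeasure μ] (f : α → EReal)
    (N : ℝ) (hN : 0 ≤ N) (hf : ∀ x, ((-N : ℝ) : EReal) ≤ f x)
    (hm : Measurable fun x => (f x + (N : EReal)).toENNReal) :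
    eIntegral μ f = ((∫⁻ x, (f x + (N : EReal)).toENNReal ∂μ : ℝ≥0∞) : EReal) +
      ((-(N * (μ univ).toReal) : ℝ) : EReal) := by
  have h1 : (∫⁻ x, posE (f x) ∂μ) + ENNReal.ofReal N * μ univ =
      (∫⁻ x, (f x + (N : EReal)).toENNReal ∂μ) + ∫⁻ x, posE (-(f x)) ∂μ := by
    rw [← lintegral_const, ← lintegral_add_right _ measurable_const, ← lintegral_add_left hm]
    exact lintegral_congr fun x => posE_ident N hN _ (hf x)
  have h2 : ∫⁻ x, posE (-(f x)) ∂μ ≠ ⊤ := by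
    refine ne_top_of_le_ne_top ?_ (lintegral_mono fun x => posE_neg_le N _ (hf x))
    rw [lintegral_const]
    exact ENNReal.mul_ne_top ENNReal.ofReal_ne_top (measure_ne_top _ _)
  unfold eIntegral
  generalize ∫⁻ x, posE (f x) ∂μ = A at *
  generalize ∫⁻ x, posE (-(f x)) ∂μ = B at *
  generalize ∫⁻ x, (f x + (N : EReal)).toENNReal ∂μ = D at *
  have h3 : ENNReal.ofReal N * μ univ = ENNReal.ofReal (N * (μ univ).toReal) := by
    rw [ENNReal.ofReal_mul hN, ENNReal.ofReal_toReal (measure_ne_top _ _)]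
  rw [h3] at h1
  have hNn : 0 ≤ N * (μ univ).toReal := by positivity
  generalize N * (μ univ).toReal = R at *
  lift B to ℝ≥0 using h2
  induction A with
  | top =>
    have : D = ⊤ := by
      by_contra hD
      have : D + (B : ℝ≥0∞) ≠ ⊤ := ENNReal.add_ne_top.2 ⟨hD, ENNReal.coe_ne_top⟩
      exact this (by rw [← h1]; simp)
    subst this
    rw [EReal.coe_ennreal_top, EReal.top_add_coe]
    exact EReal.top_sub_coe (B : ℝ)
  | coe A =>
    have hD : D ≠ ⊤ := by
      rintro rfl
      rw [top_add] at h1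
      exact (ENNReal.add_ne_top.2 ⟨ENNReal.coe_ne_top, ENNReal.ofReal_ne_top⟩) h1
    lift D to ℝ≥0 using hD
    have h4 := congrArg ENNReal.toReal h1
    rw [ENNReal.toReal_add (by simp) (by simp), ENNReal.toReal_add (by simp) (by simp),
      ENNReal.toReal_ofReal hNn] at h4
    simp only [ENNReal.coe_toReal] at h4
    change (((A : ℝ) : EReal)) - ((B : ℝ) : EReal) = ((D : ℝ) : EReal) + _
    rw [← EReal.coe_sub, ← EReal.coe_add]
    congr 1
    linarith

theorem conv_aux (N a b m s t : EReal) (hs : 0 ≤ s) (ht : 0 ≤ t) (hs' : s ≠ ⊤) (ht' : t ≠ ⊤)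
    (hst : s + t = 1) (h : m ≤ s * a + t * b) :
    (m + N).toENNReal ≤ s.toENNReal * (a + N).toENNReal + t.toENNReal * (b + N).toENNReal := by
  have h1 : m + N ≤ s * (a + N) + t * (b + N) := by
    rw [EReal.left_distrib_of_nonneg_of_ne_top hs hs', EReal.left_distrib_of_nonneg_of_ne_top ht ht']
    calc m + N ≤ (s * a + t * b) + N := by gcongr
      _ = (s * a + t * b) + (s + t) * N := by rw [hst, one_mul]
      _ = (s * a + t * b) + (s * N + t * N) := by rw [EReal.right_distrib_of_nonneg hs ht]
      _ = _ := by abel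
  refine (EReal.toENNReal_le_toENNReal h1).trans (EReal.toENNReal_add_le.trans ?_)
  rw [EReal.toENNReal_mul hs, EReal.toENNReal_mul ht]

theorem exists_mix {X : Type*} [MeasurableSpace X] (p q : ProbabilityMeasure X) (s t : ℝ)
    (hs : 0 ≤ s) (ht : 0 ≤ t) (hst : s + t = 1) : ∃ m : ProbabilityMeasure X,
      (m : Measure X) = ENNReal.ofReal s • (p : Measure X) + ENNReal.ofReal t • (q : Measure X) := by
  refine ⟨⟨ENNReal.ofReal s • (p : Measure X) + ENNReal.ofReal t • (q : Measure X), ⟨?_⟩⟩, rfl⟩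
  simp only [Measure.coe_add, Measure.coe_smul, Pi.add_apply, Pi.smul_apply, measure_univ, smul_eq_mul, mul_one]
  rw [← ENNReal.ofReal_add hs ht, hst, ENNReal.ofReal_one]

end WLSC

open WLSC in
theorem stmt5
    {X₁ : Type*} [MetricSpace X₁] [PolishSpace X₁] [MeasurableSpace X₁] [BorelSpace X₁]
    {X₂ : Type*} [MetricSpace X₂] [PolishSpace X₂] [MeasurableSpace X₂] [BorelSpace X₂]
    [Nonempty X₂]
    (C : X₁ → ProbabilityMeasure X₂ → EReal)
    (hClsc : LowerSemicontinuous fun q : X₁ × ProbabilityMeasure X₂ => C q.1 q.2)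
    (hCbdd : ∃ K : ℝ, ∀ x p, (K : EReal) ≤ C x p)
    (hCconv : ∀ (x : X₁) (p q m : ProbabilityMeasure X₂) (t : ℝ), 0 ≤ t → t ≤ 1 →
      (m : Measure X₂) = ENNReal.ofReal t • (p : Measure X₂)
          + ENNReal.ofReal (1 - t) • (q : Measure X₂) →
      C x m ≤ (t : EReal) * C x p + ((1 - t : ℝ) : EReal) * C x q)
    (πk : ℕ → FiniteMeasure (X₁ × X₂)) (π : FiniteMeasure (X₁ × X₂))
    (hconv : Filter.Tendsto πk Filter.atTop (nhds π)) :
    eIntegral (π : Measure (X₁ × X₂)).fst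
        (fun x₁ => C x₁ ⟨(π : Measure (X₁ × X₂)).condKernel x₁, inferInstance⟩)
      ≤ Filter.liminf (fun k =>
          eIntegral ((πk k : Measure (X₁ × X₂))).fst
            (fun x₁ => C x₁ ⟨((πk k : Measure (X₁ × X₂))).condKernel x₁, inferInstance⟩))
          Filter.atTop := by
  obtain ⟨K, hK⟩ := hCbdd
  let N : ℝ := max (-K) 0
  have hN : 0 ≤ N := le_max_right _ _
  have hNC : ∀ x p, ((-N : ℝ) : EReal) ≤ C x p := fun x p =>
    le_trans (by exact_mod_cast neg_le.1 (le_max_left (-K) 0)) (hK x p)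
  let c : X₁ → ProbabilityMeasure X₂ → ℝ≥0∞ := fun x p => (C x p + (N : EReal)).toENNReal
  have hc : LowerSemicontinuous fun q : X₁ × ProbabilityMeasure X₂ => c q.1 q.2 := by
    have hcont : Continuous fun a : EReal => (a + (N : EReal)).toENNReal := by
      refine EReal.continuous_toENNReal.comp ?_
      refine continuous_iff_continuousAt.2 fun a => ?_
      exact ContinuousAt.comp (f := fun a : EReal => (a, (N : EReal)))
        (g := fun p : EReal × EReal => p.1 + p.2)
        (EReal.continuousAt_add (Or.inr (EReal.coe_ne_bot _)) (Or.inr (EReal.coe_ne_top _)))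
        (by fun_prop)
    exact hcont.comp_lowerSemicontinuous hClsc fun a b hab =>
      EReal.toENNReal_le_toENNReal (by gcongr)
  have hcc : ∀ (x : X₁) (p q : ProbabilityMeasure X₂) (s t : ℝ), 0 ≤ s → 0 ≤ t → s + t = 1 →
      ∃ m : ProbabilityMeasure X₂,
      (m : Measure X₂) = ENNReal.ofReal s • (p : Measure X₂) + ENNReal.ofReal t • (q : Measure X₂)
      ∧ c x m ≤ ENNReal.ofReal s * c x p + ENNReal.ofReal t * c x q := by
    intro x p q s t hs ht hst
    obtain ⟨m, hm⟩ := exists_mix p q s t hs ht hst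
    refine ⟨m, hm, ?_⟩
    have ht1 : t = 1 - s := by linarith
    have h := hCconv x p q m s hs (by linarith) (by rw [hm, ht1])
    rw [← ht1] at h
    have := conv_aux (N : EReal) (C x p) (C x q) (C x m) s t (by exact_mod_cast hs)
      (by exact_mod_cast ht) (EReal.coe_ne_top _) (EReal.coe_ne_top _) (by exact_mod_cast hst) h
    simpa using this
  obtain ⟨i₁, h₁⟩ := Metric.PiNatEmbed.exists_embedding_to_hilbert_cube (X := X₁)
  obtain ⟨i₂, h₂⟩ := Metric.PiNatEmbed.exists_embedding_to_hilbert_cube (X := X₂)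
  have hmeas : ∀ (ρ : Measure (X₁ × X₂)) [IsFiniteMeasure ρ], Measurable fun x => c x (dis ρ x) := by
    intro ρ _
    obtain ⟨c', -, hcm, hce⟩ := exists_ext i₁ h₁ i₂ h₂ c hc
    have := hcm.comp (lawE_meas i₁ i₂ h₂.continuous.measurable ρ h₁.continuous.measurable)
    simpa only [Function.comp_def, hce] using this
  have hcore := exists_ultra (u := fun k => ∫⁻ x, c x (dis (πk k : Measure (X₁ × X₂)) x) ∂(πk k : Measure (X₁ × X₂)).fst)
    (J := ∫⁻ x, c x (dis (π : Measure (X₁ × X₂)) x) ∂(π : Measure (X₁ × X₂)).fst)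
    fun L hL => core_ultra i₁ h₁ i₂ h₂ c hc hcc πk π L (hconv.mono_left hL)
  have hE : ∀ (ρ : Measure (X₁ × X₂)) [IsFiniteMeasure ρ],
      eIntegral ρ.fst (fun x₁ => C x₁ ⟨ρ.condKernel x₁, inferInstance⟩)
        = ((∫⁻ x, c x (dis ρ x) ∂ρ.fst : ℝ≥0∞) : EReal) + ((-(N * (ρ univ).toReal) : ℝ) : EReal) := by
    intro ρ _
    have := eIntegral_eq ρ.fst (fun x => C x (dis ρ x)) N hN (fun x => hNC _ _) (hmeas ρ)
    rw [Measure.fst_univ] at this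
    exact this
  simp only [hE]
  have hmt : Tendsto (fun k => ((-(N * ((πk k : Measure (X₁ × X₂)) univ).toReal) : ℝ) : EReal)) atTop
      (𝓝 ((-(N * ((π : Measure (X₁ × X₂)) univ).toReal) : ℝ) : EReal)) := by
    have h0 : Tendsto (fun k => (πk k).mass) atTop (𝓝 π.mass) :=
      (FiniteMeasure.continuous_mass.tendsto _).comp hconv
    have h1 : Tendsto (fun k => ((πk k).mass : ℝ)) atTop (𝓝 (π.mass : ℝ)) :=
      NNReal.tendsto_coe.2 h0
    exact (continuous_coe_real_ereal.tendsto _).comp (h1.const_mul N).neg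
  have hcoe : ((∫⁻ x, c x (dis (π : Measure (X₁ × X₂)) x) ∂(π : Measure (X₁ × X₂)).fst : ℝ≥0∞) : EReal) ≤
      liminf (fun k => ((∫⁻ x, c x (dis (πk k : Measure (X₁ × X₂)) x) ∂(πk k : Measure (X₁ × X₂)).fst : ℝ≥0∞) : EReal)) atTop := by
    have hmono : Monotone (fun a : ℝ≥0∞ => (a : EReal)) := fun a b hab => EReal.coe_ennreal_le_coe_ennreal_iff.2 hab
    have := hmono.map_liminf_of_continuousAt (F := atTop)
      (fun k => ∫⁻ x, c x (dis (πk k : Measure (X₁ × X₂)) x) ∂(πk k : Measure (X₁ × X₂)).fst)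
      continuous_coe_ennreal_ereal.continuousAt
    exact (hmono hcore).trans this.le
  calc _ ≤ _ := add_le_add hcoe hmt.liminf_eq.ge
    _ ≤ _ := EReal.le_liminf_add
end
end
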